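/- Let Ω ⊆ ℝ³ be a domain and let (ρ, u) be a weak solution of the stationary barotropic Navier–Stokes system on Ω with pressure p and potential G. Assume p : [0,∞) → ℝ is continuous, p(0) = 0, p(s) ≥ 0 for all s ≥ 0, and there is a constant C > 0 with p(s) ≤ C·√s for all 0 ≤ s < 1. Assume either G ∈ D₀^{1,q}(Ω) for some 6/5 ≤ q < ∞ or G ∈ W^{1,∞}(Ω). If ρ ∈ L¹(Ω) ∩ L^∞(Ω), then u = 0 almost everywhere in Ω. -/

import Mathlib

noncomputable section

open MeasureTheory Metric Filter Topology Set

/-- Three-dimensional Euclidean space. -/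
abbrev E3 : Type := EuclideanSpace ℝ (Fin 3)

/-- Partial derivative of a scalar function in the `i`-th coordinate direction. -/
def pd (f : E3 → ℝ) (i : Fin 3) : E3 → ℝ :=
  fun x => fderiv ℝ f x (EuclideanSpace.single i 1)

/-- Classical gradient matrix of a vector field: `(tgrad φ x) i j = ∂_j φ_i (x)`. -/
def tgrad (φ : E3 → Fin 3 → ℝ) (x : E3) : Fin 3 → Fin 3 → ℝ :=
  fun i j => pd (fun y => φ y i) j x

/-- Smooth compactly supported scalar test function with support in `Ω`. -/
def IsTest (Ω : Set E3) (φ : E3 → ℝ) : Prop :=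
  ContDiff ℝ ((⊤ : ℕ∞) : WithTop ℕ∞) φ ∧ HasCompactSupport φ ∧ tsupport φ ⊆ Ω

/-- `C^n` compactly supported vector-valued test function with support in `Ω`. -/
def IsTestVec (n : WithTop ℕ∞) (Ω : Set E3) (φ : E3 → Fin 3 → ℝ) : Prop :=
  ContDiff ℝ n φ ∧ HasCompactSupport φ ∧ tsupport φ ⊆ Ω

/-- The Newtonian viscous stress tensor
`S(M) = μ (M + Mᵗ - (2/3) (tr M) I) + η (tr M) I`. -/
def Smat (μ η : ℝ) (M : Fin 3 → Fin 3 → ℝ) : Fin 3 → Fin 3 → ℝ :=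
  fun i j =>
    μ * (M i j + M j i - (2 / 3) * (∑ k, M k k) * (if i = j then (1 : ℝ) else 0))
      + η * (∑ k, M k k) * (if i = j then (1 : ℝ) else 0)

/-- `dG` is the weak gradient of the scalar function `G` on `Ω`. -/
def HasWeakGradOn (Ω : Set E3) (G : E3 → ℝ) (dG : E3 → Fin 3 → ℝ) : Prop :=
  ∀ φ : E3 → ℝ, IsTest Ω φ → ∀ i : Fin 3,
    ∫ x in Ω, G x * pd φ i x = - ∫ x in Ω, dG x i * φ x

/-- `du` is the weak gradient (Jacobian) of the vector field `u` on `Ω`. -/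
def HasWeakGradVecOn (Ω : Set E3) (u : E3 → Fin 3 → ℝ) (du : E3 → Fin 3 → Fin 3 → ℝ) : Prop :=
  ∀ φ : E3 → ℝ, IsTest Ω φ → ∀ i j : Fin 3,
    ∫ x in Ω, u x i * pd φ j x = - ∫ x in Ω, du x i j * φ x

/-- `u ∈ D₀^{1,2}(Ω; ℝ³)` with weak gradient `du`: `u` is locally integrable on `Ω`, its weak
gradient belongs to `L²(Ω)`, and `u` can be approximated by smooth compactly supported fields
`uₙ` with `∇uₙ → ∇u` in `L²(Ω)` and `uₙ → u` in `L⁶(Ω)`. -/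
def MemD012 (Ω : Set E3) (u : E3 → Fin 3 → ℝ) (du : E3 → Fin 3 → Fin 3 → ℝ) : Prop :=
  LocallyIntegrableOn u Ω volume ∧
  HasWeakGradVecOn Ω u du ∧
  MemLp du 2 (volume.restrict Ω) ∧
  ∃ un : ℕ → E3 → Fin 3 → ℝ,
    (∀ n, IsTestVec ((⊤ : ℕ∞) : WithTop ℕ∞) Ω (un n)) ∧
    Tendsto (fun n => eLpNorm (fun x => tgrad (un n) x - du x) 2 (volume.restrict Ω))
      atTop (𝓝 0) ∧
    Tendsto (fun n => eLpNorm (fun x => un n x - u x) 6 (volume.restrict Ω)) atTop (𝓝 0)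

/-- `G ∈ D₀^{1,q}(Ω)` with weak gradient `dG`. -/
def MemD01q (Ω : Set E3) (G : E3 → ℝ) (dG : E3 → Fin 3 → ℝ) (q : ℝ) : Prop :=
  HasWeakGradOn Ω G dG ∧
  MemLp dG (ENNReal.ofReal q) (volume.restrict Ω) ∧
  ∃ Gn : ℕ → E3 → ℝ,
    (∀ n, IsTest Ω (Gn n)) ∧
    Tendsto (fun n =>
        eLpNorm (fun x => (fun i => pd (Gn n) i x) - dG x) (ENNReal.ofReal q)
          (volume.restrict Ω)) atTop (𝓝 0) ∧
    ∀ K : Set E3, IsCompact K → K ⊆ Ω →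
      Tendsto (fun n => ∫ x in K, |Gn n x - G x|) atTop (𝓝 0)

/-- `G ∈ W^{1,∞}(Ω)` with weak gradient `dG`: both `G` and `∇G` are essentially bounded. -/
def MemW1inf (Ω : Set E3) (G : E3 → ℝ) (dG : E3 → Fin 3 → ℝ) : Prop :=
  HasWeakGradOn Ω G dG ∧
  MemLp G ⊤ (volume.restrict Ω) ∧ MemLp dG ⊤ (volume.restrict Ω)

/-- Weak solution `(ρ, u)` (with weak gradient `du` of `u` and weak gradient `dG` of `G`) of the
stationary barotropic Navier–Stokes system
`div(ρu) = 0`, `div(ρ u⊗u) + ∇p(ρ) − div S(∇u) = ρ∇G` on `Ω` with no-slip boundary condition. -/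
structure WeakSolution (Ω : Set E3) (μ η : ℝ) (p : ℝ → ℝ)
    (G : E3 → ℝ) (dG : E3 → Fin 3 → ℝ)
    (ρ : E3 → ℝ) (u : E3 → Fin 3 → ℝ) (du : E3 → Fin 3 → Fin 3 → ℝ) : Prop where
  aemeas_ρ : AEMeasurable ρ volume
  aemeas_u : AEMeasurable u volume
  weakGrad_G : HasWeakGradOn Ω G dG
  ρ_nonneg : ∀ᵐ x ∂(volume.restrict Ω), 0 ≤ ρ x
  ρu_locInt : LocallyIntegrableOn (fun x => fun i => ρ x * u x i) (closure Ω) volume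
  mass : ∀ φ : E3 → ℝ, ContDiff ℝ ((⊤ : ℕ∞) : WithTop ℕ∞) φ → HasCompactSupport φ →
    ∫ x in Ω, ρ x * (∑ i, u x i * pd φ i x) = 0
  ρ_locInt : LocallyIntegrableOn ρ Ω volume
  ρu2_locInt : LocallyIntegrableOn (fun x => ρ x * (∑ i, (u x i) ^ 2)) Ω volume
  pρ_locInt : LocallyIntegrableOn (fun x => p (ρ x)) Ω volume
  ρdG_locInt : LocallyIntegrableOn (fun x => fun i => ρ x * dG x i) Ω volume
  u_D012 : MemD012 Ω u du
  momentum : ∀ φ : E3 → Fin 3 → ℝ, IsTestVec 1 Ω φ →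
    ∫ x in Ω, ((∑ i, ∑ j, ρ x * u x i * u x j * tgrad φ x i j)
        + p (ρ x) * (∑ i, tgrad φ x i i))
      = (∫ x in Ω, ∑ i, ∑ j, Smat μ η (du x) i j * tgrad φ x i j)
        - ∫ x in Ω, ∑ i, ρ x * dG x i * φ x i

open scoped ENNReal NNReal Convolution ContDiff

section aux


/-- `L^p` convergence on the whole space. -/
def CV (p : ℝ≥0∞) (f : ℕ → E3 → ℝ) (g : E3 → ℝ) : Prop :=
  (∀ n, MemLp (f n) p volume) ∧ MemLp g p volume ∧
    Tendsto (fun n => eLpNorm (fun x => f n x - g x) p volume) atTop (𝓝 0)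

lemma CV.const {p : ℝ≥0∞} {g : E3 → ℝ} (hg : MemLp g p volume) : CV p (fun _ => g) g := by
  refine ⟨fun _ => hg, hg, ?_⟩
  simp

lemma tendsto_zero_of_le_ennreal {f g : ℕ → ℝ≥0∞} (h : ∀ n, f n ≤ g n)
    (hg : Tendsto g atTop (𝓝 0)) : Tendsto f atTop (𝓝 0) :=
  tendsto_of_tendsto_of_tendsto_of_le_of_le tendsto_const_nhds hg (fun _ => bot_le) h

lemma CV.add {p : ℝ≥0∞} (hp : 1 ≤ p) {f f' : ℕ → E3 → ℝ} {g g' : E3 → ℝ}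
    (h : CV p f g) (h' : CV p f' g') :
    CV p (fun n x => f n x + f' n x) (fun x => g x + g' x) := by
  refine ⟨fun n => (h.1 n).add (h'.1 n), h.2.1.add h'.2.1, ?_⟩
  refine tendsto_zero_of_le_ennreal
    (g := fun n => eLpNorm (fun x => f n x - g x) p volume
      + eLpNorm (fun x => f' n x - g' x) p volume) (fun n => ?_) ?_
  · have := eLpNorm_add_le (μ := volume) (((h.1 n).sub h.2.1).1) (((h'.1 n).sub h'.2.1).1) hp
    refine le_trans (le_of_eq ?_) this
    congr 1
    ext x
    simp only [Pi.add_apply, Pi.sub_apply]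
    ring
  · simpa using h.2.2.add h'.2.2

lemma CV.sum {p : ℝ≥0∞} (hp : 1 ≤ p) {ι : Type*} (s : Finset ι) {f : ι → ℕ → E3 → ℝ}
    {g : ι → E3 → ℝ} (h : ∀ i ∈ s, CV p (f i) (g i)) :
    CV p (fun n x => ∑ i ∈ s, f i n x) (fun x => ∑ i ∈ s, g i x) := by
  classical
  induction s using Finset.induction_on with
  | empty => simpa using CV.const (p := p) (g := fun _ => (0 : ℝ)) (by simp)
  | insert a s ha ih =>
    simp only [Finset.sum_insert ha]
    exact CV.add hp (h a (by simp)) (ih fun i hi => h i (by simp [hi]))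

lemma CV.mul {p q r : ℝ≥0∞} (hr : 1 ≤ r) [ENNReal.HolderTriple p q r] {f f' : ℕ → E3 → ℝ}
    {g g' : E3 → ℝ} (h : CV p f g) (h' : CV q f' g') :
    CV r (fun n x => f n x * f' n x) (fun x => g x * g' x) := by
  refine ⟨fun n => (h'.1 n).mul' (h.1 n), h'.2.1.mul' h.2.1, ?_⟩
  have key : ∀ n, eLpNorm (fun x => f n x * f' n x - g x * g' x) r volume ≤
      eLpNorm (fun x => f n x - g x) p volume * eLpNorm (fun x => f' n x - g' x) q volume
      + (eLpNorm (fun x => f n x - g x) p volume * eLpNorm g' q volume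
      + eLpNorm g p volume * eLpNorm (fun x => f' n x - g' x) q volume) := by
    intro n
    have m1 : AEStronglyMeasurable (fun x => f n x - g x) volume := ((h.1 n).sub h.2.1).1
    have m2 : AEStronglyMeasurable (fun x => f' n x - g' x) volume := ((h'.1 n).sub h'.2.1).1
    have e1 := eLpNorm_smul_le_mul_eLpNorm (p := p) (q := q) (r := r) m2 m1
    have e2 := eLpNorm_smul_le_mul_eLpNorm (p := p) (q := q) (r := r) h'.2.1.1 m1
    have e3 := eLpNorm_smul_le_mul_eLpNorm (p := p) (q := q) (r := r) m2 h.2.1.1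
    have s1 := eLpNorm_add_le (μ := volume) (p := r) (m1.smul m2)
      ((m1.smul h'.2.1.1).add (h.2.1.1.smul m2)) hr
    have s2 := eLpNorm_add_le (μ := volume) (p := r) (m1.smul h'.2.1.1) (h.2.1.1.smul m2) hr
    refine le_trans (le_of_eq ?_) (s1.trans (add_le_add e1 (s2.trans (add_le_add e2 e3))))
    congr 1
    ext x
    simp only [Pi.add_apply, Pi.smul_apply', smul_eq_mul, Pi.mul_apply]
    ring
  refine tendsto_zero_of_le_ennreal key ?_
  have a1 := ENNReal.Tendsto.mul h.2.2 (Or.inr ENNReal.zero_ne_top) h'.2.2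
    (Or.inr ENNReal.zero_ne_top)
  have a2 := ENNReal.Tendsto.mul_const (b := eLpNorm g' q volume) h.2.2
    (Or.inr h'.2.1.2.ne)
  have a3 := ENNReal.Tendsto.const_mul (a := eLpNorm g p volume) h'.2.2
    (Or.inr h.2.1.2.ne)
  simpa using a1.add (a2.add a3)

lemma CV.integral {f : ℕ → E3 → ℝ} {g : E3 → ℝ} (h : CV 1 f g) :
    Tendsto (fun n => ∫ x, f n x) atTop (𝓝 (∫ x, g x)) :=
  tendsto_integral_of_L1' g h.2.1.1 (Eventually.of_forall fun n => memLp_one_iff_integrable.1 (h.1 n))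
    h.2.2

lemma CV.subseq {p : ℝ≥0∞} {f : ℕ → E3 → ℝ} {g : E3 → ℝ} (h : CV p f g) {ns : ℕ → ℕ}
    (hns : Tendsto ns atTop atTop) : CV p (fun n => f (ns n)) g :=
  ⟨fun n => h.1 _, h.2.1, h.2.2.comp hns⟩

lemma CV.congr {p : ℝ≥0∞} {f f' : ℕ → E3 → ℝ} {g g' : E3 → ℝ} (h : CV p f g)
    (hf : ∀ n x, f n x = f' n x) (hg : ∀ x, g x = g' x) : CV p f' g' := by
  have e1 : f = f' := by funext n x; exact hf n x
  have e2 : g = g' := by funext x; exact hg x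
  rwa [← e1, ← e2]

lemma CV.const_mul {p : ℝ≥0∞} (c : ℝ) {f : ℕ → E3 → ℝ} {g : E3 → ℝ} (h : CV p f g) :
    CV p (fun n x => c * f n x) (fun x => c * g x) := by
  refine ⟨fun n => (h.1 n).const_mul c, h.2.1.const_mul c, ?_⟩
  have : ∀ n, eLpNorm (fun x => c * f n x - c * g x) p volume =
      ‖c‖ₑ * eLpNorm (fun x => f n x - g x) p volume := by
    intro n
    rw [← eLpNorm_const_smul]
    congr 1
    ext x
    simp only [Pi.smul_apply, smul_eq_mul]
    ring
  simp only [this]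
  simpa using ENNReal.Tendsto.const_mul (a := ‖c‖ₑ) h.2.2 (Or.inr (by simp))

/-- Dominated convergence in `L^p`: multiplication by bounded a.e. convergent factors. -/
lemma CV.bdd_mul {p : ℝ≥0∞} (hp : 1 ≤ p) (hp' : p ≠ ⊤) {w : ℕ → E3 → ℝ} {w' : E3 → ℝ} {C : ℝ}
    (hw : ∀ n, AEStronglyMeasurable (w n) volume) (hC : ∀ n x, |w n x| ≤ C)
    (hw' : ∀ᵐ x, Tendsto (fun n => w n x) atTop (𝓝 (w' x)))
    {f : ℕ → E3 → ℝ} {g : E3 → ℝ} (h : CV p f g) :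
    CV p (fun n x => w n x * f n x) (fun x => w' x * g x) := by
  have mw' : AEStronglyMeasurable w' volume := aestronglyMeasurable_of_tendsto_ae atTop hw hw'
  have bw' : ∀ᵐ x, |w' x| ≤ C := by
    filter_upwards [hw'] with x hx
    exact le_of_tendsto hx.abs (Eventually.of_forall fun n => hC n x)
  have C0 : 0 ≤ C := (abs_nonneg _).trans (hC 0 0)
  have tw : MemLp w' ⊤ volume := memLp_top_of_bound mw' C bw'
  have twn : ∀ n, MemLp (w n) ⊤ volume := fun n => memLp_top_of_bound (hw n) C
    (Eventually.of_forall (hC n))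
  refine ⟨fun n => (h.1 n).mul' (twn n), h.2.1.mul' tw, ?_⟩
  have key : ∀ n, eLpNorm (fun x => w n x * f n x - w' x * g x) p volume ≤
      ENNReal.ofReal C * eLpNorm (fun x => f n x - g x) p volume
      + eLpNorm (fun x => (w n x - w' x) * g x) p volume := by
    intro n
    have m1 : AEStronglyMeasurable (fun x => f n x - g x) volume := ((h.1 n).sub h.2.1).1
    have s1 := eLpNorm_add_le (μ := volume) (p := p) ((hw n).smul m1)
      (((hw n).sub mw').smul h.2.1.1) hp
    have e1 : eLpNorm (w n • fun x => f n x - g x) p volume ≤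
        ENNReal.ofReal C * eLpNorm (fun x => f n x - g x) p volume := by
      refine eLpNorm_le_mul_eLpNorm_of_ae_le_mul (Eventually.of_forall fun x => ?_) p
      simp only [Pi.smul_apply', smul_eq_mul, norm_mul, Real.norm_eq_abs]
      gcongr
      exact hC n x
    refine le_trans (le_of_eq ?_) (s1.trans (add_le_add e1 le_rfl))
    congr 1
    ext x
    simp only [Pi.add_apply, Pi.smul_apply', smul_eq_mul, Pi.mul_apply, Pi.sub_apply]
    ring
  refine tendsto_zero_of_le_ennreal key ?_
  have a1 := ENNReal.Tendsto.const_mul (a := ENNReal.ofReal C) h.2.2 (Or.inr (by simp))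
  have p0 : p ≠ 0 := by
    intro h0
    simp [h0] at hp
  have a2 : Tendsto (fun n => eLpNorm (fun x => (w n x - w' x) * g x) p volume) atTop (𝓝 0) := by
    simp only [eLpNorm_eq_lintegral_rpow_enorm_toReal p0 hp']
    have pr : 0 < p.toReal := ENNReal.toReal_pos p0 hp'
    have t := tendsto_lintegral_of_dominated_convergence' (μ := (volume : Measure E3))
      (F := fun n x => ‖(w n x - w' x) * g x‖ₑ ^ p.toReal) (f := fun _ => 0)
      (fun x => (‖(2 * C) * g x‖ₑ) ^ p.toReal) (fun n => ?_) (fun n => ?_) ?_ ?_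
    · have := (ENNReal.continuous_rpow_const (y := 1 / p.toReal)).tendsto 0 |>.comp
        (by simpa using t)
      simpa [Function.comp_def, pr, pr.ne', ENNReal.zero_rpow_of_pos] using this
    · exact ((((hw n).sub mw').mul h.2.1.1).enorm).pow_const _
    · filter_upwards [bw'] with x hx
      gcongr
      rw [enorm_le_iff_norm_le, norm_mul, norm_mul]
      gcongr
      rw [Real.norm_eq_abs, Real.norm_eq_abs, abs_of_nonneg (a := 2 * C) (by positivity)]
      have := abs_sub (w n x) (w' x)
      have := hC n x
      linarith
    · have := (h.2.1.const_mul (2 * C)).2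
      exact (lintegral_rpow_enorm_lt_top_of_eLpNorm_lt_top p0 hp' this).ne
    · filter_upwards [hw'] with x hx
      have c1 : Tendsto (fun n => (w n x - w' x) * g x) atTop (𝓝 0) := by
        simpa using (hx.sub_const (w' x)).mul_const (g x)
      have c2 := (continuous_enorm.tendsto (0 : ℝ)).comp c1
      have c3 := ((ENNReal.continuous_rpow_const (y := p.toReal)).tendsto _).comp c2
      simpa [Function.comp_def, ENNReal.zero_rpow_of_pos pr] using c3
  simpa using a1.add a2

/-- Continuity of translations in `L^p`. -/
lemma CV.translate {p : ℝ≥0∞} (hp : 1 ≤ p) (hp' : p ≠ ⊤) {f : ℕ → E3 → ℝ} {g : E3 → ℝ}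
    (h : CV p f g) {a : ℕ → E3} (ha : Tendsto a atTop (𝓝 0)) :
    CV p (fun n x => f n (x - a n)) g := by
  have mp : ∀ c : E3, MeasurePreserving (fun x : E3 => x - c) volume volume :=
    fun c => measurePreserving_sub_right volume c
  refine ⟨fun n => (h.1 n).comp_measurePreserving (mp _), h.2.1, ?_⟩
  have : Fact (1 ≤ p) := ⟨hp⟩
  have : Fact (p ≠ ⊤) := ⟨hp'⟩
  have T : Tendsto (fun n => eLpNorm (fun x => g (x - a n) - g x) p volume) atTop (𝓝 0) := by
    have c1 : Continuous (fun c : E3ᵈᵃᵃ => c +ᵥ (h.2.1.toLp g)) := by fun_prop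
    have c2 : Tendsto (fun n => DomAddAct.mk (- a n)) atTop (𝓝 (DomAddAct.mk (0 : E3))) := by
      have : Continuous (DomAddAct.mk : E3 → E3ᵈᵃᵃ) := DomAddAct.continuous_mk
      refine (this.tendsto 0).comp ?_
      simpa using ha.neg
    have c3 := (c1.tendsto _).comp c2
    have c4 : (DomAddAct.mk (0 : E3)) +ᵥ h.2.1.toLp g = h.2.1.toLp g := by
      simp
    rw [c4, tendsto_iff_edist_tendsto_0] at c3
    refine c3.congr fun n => ?_
    simp only [Function.comp_def]
    rw [DomAddAct.mk_vadd_toLp, Lp.edist_toLp_toLp]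
    congr 1
    ext x
    simp [sub_eq_neg_add]
  refine tendsto_zero_of_le_ennreal
    (g := fun n => eLpNorm (fun x => f n x - g x) p volume
      + eLpNorm (fun x => g (x - a n) - g x) p volume) (fun n => ?_) ?_
  · have m1 : AEStronglyMeasurable (fun x => f n x - g x) volume := ((h.1 n).sub h.2.1).1
    have m1' : AEStronglyMeasurable ((fun x => f n x - g x) ∘ (fun x => x - a n)) volume :=
      m1.comp_measurePreserving (mp _)
    have m2 : AEStronglyMeasurable (fun x => g (x - a n) - g x) volume :=
      ((h.2.1.comp_measurePreserving (mp (a n))).sub h.2.1).1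
    have := eLpNorm_add_le (μ := volume) m1' m2 hp
    rw [eLpNorm_comp_measurePreserving m1 (mp _)] at this
    refine le_trans (le_of_eq ?_) this
    congr 1
    ext x
    simp
  · simpa using h.2.2.add T


lemma holderTriple_ofReal {a b c : ℝ} (ha : 0 < a) (hb : 0 < b) (hc : 0 < c)
    (h : a⁻¹ + b⁻¹ = c⁻¹) :
    ENNReal.HolderTriple (ENNReal.ofReal a) (ENNReal.ofReal b) (ENNReal.ofReal c) := by
  constructor
  rw [← ENNReal.ofReal_inv_of_pos ha, ← ENNReal.ofReal_inv_of_pos hb,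
    ← ENNReal.ofReal_inv_of_pos hc, ← ENNReal.ofReal_add (by positivity) (by positivity), h]

lemma ht663 : ENNReal.HolderTriple 6 6 3 := by
  have := holderTriple_ofReal (a := 6) (b := 6) (c := 3) (by norm_num) (by norm_num) (by norm_num)
    (by norm_num)
  simpa using this

lemma ht362 : ENNReal.HolderTriple 3 6 2 := by
  have := holderTriple_ofReal (a := 3) (b := 6) (c := 2) (by norm_num) (by norm_num) (by norm_num)
    (by norm_num)
  simpa using this

lemma ht65 : ENNReal.HolderTriple (ENNReal.ofReal (6/5)) 6 1 := by
  have := holderTriple_ofReal (a := 6/5) (b := 6) (c := 1) (by norm_num) (by norm_num)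
    (by norm_num) (by norm_num)
  simpa using this

/-- The whole-space setting to which the theorem is reduced. -/
structure Setup (M : ℝ) (R : E3 → ℝ) (U : E3 → Fin 3 → ℝ) (D : E3 → Fin 3 → Fin 3 → ℝ)
    (v : ℕ → E3 → Fin 3 → ℝ) : Prop where
  Rm : Measurable R
  R0 : ∀ x, 0 ≤ R x
  RM : ∀ x, R x ≤ M
  R1 : Integrable R volume
  vsm : ∀ n, ContDiff ℝ ∞ (v n)
  vcs : ∀ n, HasCompactSupport (v n)
  vU : ∀ i, CV 6 (fun n x => v n x i) (fun x => U x i)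
  vD : ∀ i j, CV 2 (fun n x => pd (fun y => v n y i) j x) (fun x => D x i j)
  vae : ∀ᵐ x, Tendsto (fun n => v n x) atTop (𝓝 (U x))
  mass : ∀ φ : E3 → ℝ, ContDiff ℝ ∞ φ → HasCompactSupport φ →
    ∫ x, R x * (∑ i, U x i * pd φ i x) = 0

lemma memLp_of_bdd_integrable {f : E3 → ℝ} {M : ℝ} (h1 : Integrable f volume)
    (hM : ∀ᵐ x, |f x| ≤ M) {p : ℝ≥0∞} (hp : 1 ≤ p) : MemLp f p volume := by
  rcases eq_or_ne p ⊤ with rfl | hp'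
  · exact memLp_top_of_bound h1.1 M hM
  · have p0 : p ≠ 0 := by
      intro h0
      simp [h0] at hp
    rw [← integrable_norm_rpow_iff h1.1 p0 hp']
    have pr : 1 ≤ p.toReal := by
      have := ENNReal.toReal_mono hp' hp
      simpa using this
    refine Integrable.mono' (h1.norm.const_mul (M ^ (p.toReal - 1))) ?_ ?_
    · exact (h1.1.norm.aemeasurable.pow_const _).aestronglyMeasurable
    · filter_upwards [hM] with x hx
      rw [Real.norm_of_nonneg (by positivity)]
      rcases eq_or_ne (f x) 0 with h0 | h0
      · simp [h0, Real.zero_rpow (by linarith : p.toReal ≠ 0)]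
      · have : ‖f x‖ ^ p.toReal = ‖f x‖ ^ (p.toReal - 1) * ‖f x‖ := by
          rw [← Real.rpow_add_one (by simpa using h0)]
          simp
        rw [this]
        gcongr
        exact hx

section pdlemmas

lemma pd_continuous {f : E3 → ℝ} (hf : ContDiff ℝ 1 f) (i : Fin 3) : Continuous (pd f i) := by
  unfold pd
  exact (hf.continuous_fderiv (by norm_num)).clm_apply continuous_const

lemma pd_contDiff {f : E3 → ℝ} (hf : ContDiff ℝ ∞ f) (i : Fin 3) : ContDiff ℝ ∞ (pd f i) := by
  unfold pd
  exact (hf.fderiv_right (m := ∞) (by simp)).clm_apply contDiff_const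

lemma pd_hasCompactSupport {f : E3 → ℝ} (hf : HasCompactSupport f) (i : Fin 3) :
    HasCompactSupport (pd f i) := hf.fderiv_apply (𝕜 := ℝ) _

lemma pd_mul {f g : E3 → ℝ} {x : E3} (hf : DifferentiableAt ℝ f x) (hg : DifferentiableAt ℝ g x)
    (i : Fin 3) : pd (fun y => f y * g y) i x = f x * pd g i x + g x * pd f i x := by
  unfold pd
  rw [fderiv_fun_mul hf hg]
  simp

lemma pd_sum {ι : Type*} (s : Finset ι) {f : ι → E3 → ℝ} {x : E3}
    (hf : ∀ k ∈ s, DifferentiableAt ℝ (f k) x) (i : Fin 3) :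
    pd (fun y => ∑ k ∈ s, f k y) i x = ∑ k ∈ s, pd (f k) i x := by
  unfold pd
  rw [fderiv_fun_sum hf]
  simp

lemma pd_integral_by_parts {f g : E3 → ℝ} (hf : ContDiff ℝ 1 f) (hg : ContDiff ℝ 1 g)
    (hgc : HasCompactSupport g) (i : Fin 3) :
    ∫ x, f x * pd g i x = - ∫ x, pd f i x * g x := by
  refine integral_mul_fderiv_eq_neg_fderiv_mul_of_integrable ?_ ?_ ?_
    (fun x _ => hf.differentiable (by norm_num) x) (fun x _ => hg.differentiable (by norm_num) x)
  · exact ((pd_continuous hf i).mul hg.continuous).integrable_of_hasCompactSupport hgc.mul_left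
  · exact (hf.continuous.mul (pd_continuous hg i)).integrable_of_hasCompactSupport
      (pd_hasCompactSupport hgc i).mul_left
  · exact (hf.continuous.mul hg.continuous).integrable_of_hasCompactSupport hgc.mul_left

end pdlemmas

namespace Setup
variable {M : ℝ} {R : E3 → ℝ} {U : E3 → Fin 3 → ℝ} {D : E3 → Fin 3 → Fin 3 → ℝ}
  {v : ℕ → E3 → Fin 3 → ℝ}

lemma Rp (S : Setup M R U D v) {p : ℝ≥0∞} (hp : 1 ≤ p) : MemLp R p volume :=
  memLp_of_bdd_integrable S.R1 (M := M) (Eventually.of_forall fun x => by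
    rw [abs_of_nonneg (S.R0 x)]
    exact S.RM x) hp

lemma vsmi (S : Setup M R U D v) (n : ℕ) (i : Fin 3) : ContDiff ℝ ∞ (fun x => v n x i) :=
  contDiff_pi.1 (S.vsm n) i

lemma vcsi (S : Setup M R U D v) (n : ℕ) (i : Fin 3) : HasCompactSupport (fun x => v n x i) :=
  (S.vcs n).comp_left (g := fun w : Fin 3 → ℝ => w i) rfl

lemma RU3 (S : Setup M R U D v) (j : Fin 3) : MemLp (fun x => R x * U x j) 3 volume := by
  have := ht663
  exact (S.vU j).2.1.mul' (S.Rp (p := 6) (by norm_num))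

lemma RU1 (S : Setup M R U D v) (j : Fin 3) : Integrable (fun x => R x * U x j) volume := by
  have := ht65
  rw [← memLp_one_iff_integrable]
  exact (S.vU j).2.1.mul' (S.Rp (p := ENNReal.ofReal (6/5)) (by
    rw [← ENNReal.ofReal_one]
    exact ENNReal.ofReal_le_ofReal (by norm_num)))

lemma RUU2 (S : Setup M R U D v) (i j : Fin 3) :
    MemLp (fun x => R x * U x i * U x j) 2 volume := by
  have := ht362
  exact (S.vU j).2.1.mul' (S.RU3 i)

/-- The convective term vanishes. -/
lemma convective (S : Setup M R U D v) :
    ∫ x, ∑ i, ∑ j, R x * U x i * U x j * D x i j = 0 := by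
  have h362 := ht362
  have c1 : CV 1 (fun n x => ∑ i, ∑ j, R x * U x j * v n x i * pd (fun y => v n y i) j x)
      (fun x => ∑ i, ∑ j, R x * U x j * U x i * D x i j) := by
    refine CV.sum le_rfl _ fun i _ => CV.sum le_rfl _ fun j _ => ?_
    have a := CV.mul (r := 2) (by norm_num) (CV.const (S.RU3 j)) (S.vU i)
    exact CV.mul (r := 1) le_rfl a (S.vD i j)
  have c2 := c1.integral
  have z : ∀ n, ∫ x, ∑ i, ∑ j, R x * U x j * v n x i * pd (fun y => v n y i) j x = 0 := by
    intro n
    have d : ∀ i x, DifferentiableAt ℝ (fun y => v n y i) x := fun i x =>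
      (S.vsmi n i).differentiable (by norm_num) x
    have m := S.mass (fun x => ∑ i, v n x i * v n x i)
      (ContDiff.sum fun i _ => (S.vsmi n i).mul (S.vsmi n i))
      ((S.vcs n).comp_left (g := fun w : Fin 3 → ℝ => ∑ i, w i * w i) (by simp))
    have e : ∀ x, R x * (∑ j, U x j * pd (fun x => ∑ i, v n x i * v n x i) j x) =
        2 * ∑ i, ∑ j, R x * U x j * v n x i * pd (fun y => v n y i) j x := by
      intro x
      have : ∀ j, pd (fun x => ∑ i, v n x i * v n x i) j x =
          ∑ i, 2 * (v n x i * pd (fun y => v n y i) j x) := by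
        intro j
        rw [pd_sum (f := fun k y => v n y k * v n y k) _ (fun k _ => (d k x).fun_mul (d k x))]
        refine Finset.sum_congr rfl fun k _ => ?_
        rw [pd_mul (d k x) (d k x)]
        ring
      simp only [this]
      simp only [Fin.sum_univ_three]
      ring
    simp only [e, integral_const_mul] at m
    linarith
  simp only [z] at c2
  have := tendsto_nhds_unique c2 tendsto_const_nhds
  rw [← this]
  congr 1
  ext x
  refine Finset.sum_congr rfl fun i _ => Finset.sum_congr rfl fun j _ => ?_
  ring

/-- Exponent `r` with `1/r + 1/q = 5/6`. -/
lemma exists_holder {q : ℝ≥0∞} (hq : ENNReal.ofReal (6/5) ≤ q) :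
    ∃ r : ℝ≥0∞, 1 ≤ r ∧ ENNReal.HolderTriple r q (ENNReal.ofReal (6/5)) := by
  have hq' : q⁻¹ ≤ (ENNReal.ofReal (6/5))⁻¹ := ENNReal.inv_le_inv.2 hq
  refine ⟨((ENNReal.ofReal (6/5))⁻¹ - q⁻¹)⁻¹, ?_, ⟨?_⟩⟩
  · rw [ENNReal.one_le_inv]
    refine tsub_le_self.trans ?_
    rw [ENNReal.inv_le_one, ← ENNReal.ofReal_one]
    exact ENNReal.ofReal_le_ofReal (by norm_num)
  · rw [inv_inv, tsub_add_cancel_of_le hq']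

lemma one_le_65 : (1 : ℝ≥0∞) ≤ ENNReal.ofReal (6/5) := by
  rw [← ENNReal.ofReal_one]
  exact ENNReal.ofReal_le_ofReal (by norm_num)

/-- The force term vanishes, `D₀^{1,q}` case. -/
lemma force_D01q (S : Setup M R U D v) {q : ℝ≥0∞} (hq : ENNReal.ofReal (6/5) ≤ q)
    {Gn : ℕ → E3 → ℝ} {g : E3 → Fin 3 → ℝ} (hs : ∀ n, ContDiff ℝ ∞ (Gn n))
    (hc : ∀ n, HasCompactSupport (Gn n))
    (h : ∀ i, CV q (fun n x => pd (Gn n) i x) (fun x => g x i)) :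
    ∫ x, ∑ i, R x * g x i * U x i = 0 := by
  obtain ⟨r, hr, hrq⟩ := exists_holder hq
  have h65 := ht65
  have c1 : CV 1 (fun n x => ∑ i, R x * pd (Gn n) i x * U x i)
      (fun x => ∑ i, R x * g x i * U x i) := by
    refine CV.sum le_rfl _ fun i _ => ?_
    have a := CV.mul one_le_65 (CV.const (S.Rp hr)) (h i)
    exact CV.mul le_rfl a (CV.const (S.vU i).2.1)
  have c2 := c1.integral
  have z : ∀ n, ∫ x, ∑ i, R x * pd (Gn n) i x * U x i = 0 := by
    intro n
    rw [← S.mass (Gn n) (hs n) (hc n)]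
    congr 1
    ext x
    rw [Finset.mul_sum]
    refine Finset.sum_congr rfl fun i _ => ?_
    ring
  simp only [z] at c2
  exact tendsto_nhds_unique c2 tendsto_const_nhds

lemma force_memLp (S : Setup M R U D v) {q : ℝ≥0∞} (hq : ENNReal.ofReal (6/5) ≤ q)
    {g : E3 → ℝ} (hg : MemLp g q volume) :
    MemLp (fun x => R x * g x) (ENNReal.ofReal (6/5)) volume := by
  obtain ⟨r, hr, hrq⟩ := exists_holder hq
  exact hg.mul' (S.Rp hr)

end Setup


def epsk (k : ℕ) : ℝ := 1 / ((k : ℝ) + 1)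

lemma epsk_pos (k : ℕ) : 0 < epsk k := by unfold epsk; positivity

lemma epsk_tendsto : Tendsto epsk atTop (𝓝 0) := tendsto_one_div_add_atTop_nhds_zero_nat

def bumpk (k : ℕ) : ContDiffBump (0 : E3) :=
  ⟨epsk k, 2 * epsk k, epsk_pos k, by linarith [epsk_pos k]⟩

/-- The mollifier at scale `epsk k`. -/
def Nk (k : ℕ) : E3 → ℝ := (bumpk k).normed volume

lemma Nk_contDiff (k : ℕ) : ContDiff ℝ ∞ (Nk k) := (bumpk k).contDiff_normed

lemma Nk_hcs (k : ℕ) : HasCompactSupport (Nk k) := (bumpk k).hasCompactSupport_normed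

lemma Nk_nonneg (k : ℕ) (x : E3) : 0 ≤ Nk k x := (bumpk k).nonneg_normed x

lemma Nk_int (k : ℕ) : ∫ x, Nk k x = 1 := (bumpk k).integral_normed

lemma Nk_integrable (k : ℕ) : Integrable (Nk k) volume :=
  (Nk_contDiff k).continuous.integrable_of_hasCompactSupport (Nk_hcs k)

lemma bumpk_scale (k : ℕ) (y : E3) : bumpk k y = bumpk 0 ((epsk k)⁻¹ • y) := by
  have h := epsk_pos k
  rw [ContDiffBump.apply, ContDiffBump.apply]
  have e1 : (bumpk k).rOut / (bumpk k).rIn = 2 := by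
    change 2 * epsk k / epsk k = 2
    field_simp
  have e2 : (bumpk 0).rOut / (bumpk 0).rIn = 2 := by
    change 2 * epsk 0 / epsk 0 = 2
    simp [epsk]
  rw [e1, e2]
  have e3 : (bumpk k).rIn = epsk k := rfl
  have e4 : (bumpk 0).rIn = 1 := by
    change epsk 0 = 1
    simp [epsk]
  rw [e3, e4]
  simp

lemma Nk_scale (k : ℕ) (y : E3) : Nk k y = ((epsk k)⁻¹) ^ 3 * Nk 0 ((epsk k)⁻¹ • y) := by
  have h := epsk_pos k
  unfold Nk
  rw [ContDiffBump.normed_def, ContDiffBump.normed_def, ← bumpk_scale]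
  have : ∫ x, bumpk k x = (epsk k) ^ 3 * ∫ x, bumpk 0 x := by
    simp only [bumpk_scale k]
    rw [Measure.integral_comp_inv_smul_of_nonneg volume (fun x => bumpk 0 x) h.le]
    simp
  rw [this]
  field_simp

lemma pdNk_scale (k : ℕ) (i : Fin 3) (z : E3) :
    pd (Nk k) i (epsk k • z) = ((epsk k)⁻¹) ^ 4 * pd (Nk 0) i z := by
  have h := epsk_pos k
  have : Nk k = fun y => ((epsk k)⁻¹) ^ 3 * Nk 0 ((epsk k)⁻¹ • y) := by
    ext y
    exact Nk_scale k y
  unfold pd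
  rw [this, fderiv_const_mul]
  · rw [fderiv_comp_smul]
    simp only [smul_smul, inv_mul_cancel₀ h.ne', one_smul]
    simp only [ContinuousLinearMap.smul_apply, smul_eq_mul]
    ring
  · have := (Nk_contDiff 0).differentiable (by norm_num)
    fun_prop

lemma integral_Nk_scale (k : ℕ) (F : E3 → ℝ) :
    ∫ y, Nk k y * F y = ∫ z, Nk 0 z * F (epsk k • z) := by
  have h := epsk_pos k
  have := Measure.integral_comp_smul_of_nonneg volume (fun y => Nk k y * F y) (epsk k) (hR := h.le)
  have e : ∀ z : E3, Nk k (epsk k • z) * F (epsk k • z)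
      = ((epsk k)⁻¹) ^ 3 * (Nk 0 z * F (epsk k • z)) := by
    intro z
    rw [Nk_scale, smul_smul, inv_mul_cancel₀ h.ne', one_smul]
    ring
  simp only [e, integral_const_mul] at this
  simp only [finrank_euclideanSpace, Fintype.card_fin, smul_eq_mul] at this
  rw [inv_pow] at this
  exact (mul_left_cancel₀ (by positivity) this).symm

lemma integral_pdNk_scale (k : ℕ) (i : Fin 3) (F : E3 → ℝ) :
    ∫ y, pd (Nk k) i y * F y = ∫ z, pd (Nk 0) i z * ((epsk k)⁻¹ * F (epsk k • z)) := by
  have h := epsk_pos k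
  have := Measure.integral_comp_smul_of_nonneg volume (fun y => pd (Nk k) i y * F y) (epsk k)
    (hR := h.le)
  have e : ∀ z : E3, pd (Nk k) i (epsk k • z) * F (epsk k • z)
      = ((epsk k)⁻¹) ^ 3 * (pd (Nk 0) i z * ((epsk k)⁻¹ * F (epsk k • z))) := by
    intro z
    rw [pdNk_scale]
    ring
  simp only [e, integral_const_mul] at this
  simp only [finrank_euclideanSpace, Fintype.card_fin, smul_eq_mul] at this
  rw [inv_pow] at this
  exact (mul_left_cancel₀ (by positivity) this).symm

lemma integral_pdN0_coord (i j : Fin 3) :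
    ∫ z, pd (Nk 0) i z * z j = if i = j then -1 else 0 := by
  have hc : ContDiff ℝ 1 (fun z : E3 => z j) := by fun_prop
  have := pd_integral_by_parts hc ((Nk_contDiff 0).of_le (by norm_num)) (Nk_hcs 0) i
  have e : ∀ x, pd (fun z : E3 => z j) i x = if i = j then 1 else 0 := by
    intro x
    unfold pd
    have : (fun z : E3 => z j) = (EuclideanSpace.proj j : E3 →L[ℝ] ℝ) := by
      ext z
      simp
    rw [this, ContinuousLinearMap.fderiv]
    simp [eq_comm]
  simp only [e, integral_const_mul, Nk_int] at this
  calc _ = ∫ z : E3, z j * pd (Nk 0) i z := by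
        congr 1
        ext z
        ring
    _ = _ := by
        rw [this]
        split_ifs <;> simp

/-- Mollification. -/
def moll (k : ℕ) (f : E3 → ℝ) : E3 → ℝ := fun x => ∫ y, Nk k y * f (x - y)

lemma moll_eq (k : ℕ) (f : E3 → ℝ) :
    moll k f = (Nk k) ⋆[ContinuousLinearMap.lsmul ℝ ℝ, volume] f := by
  ext x
  rfl

lemma moll_contDiff (k : ℕ) {f : E3 → ℝ} (hf : LocallyIntegrable f volume) :
    ContDiff ℝ ∞ (moll k f) := by
  rw [moll_eq]
  exact (Nk_hcs k).contDiff_convolution_left _ (Nk_contDiff k) hf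

lemma moll_hcs (k : ℕ) {f : E3 → ℝ} (hf : HasCompactSupport f) :
    HasCompactSupport (moll k f) := by
  rw [moll_eq]
  exact HasCompactSupport.convolution _ (Nk_hcs k) hf

lemma pd_moll (k : ℕ) {f : E3 → ℝ} (hf : LocallyIntegrable f volume) (i : Fin 3) (x : E3) :
    pd (moll k f) i x = ∫ y, pd (Nk k) i y * f (x - y) := by
  rw [moll_eq]
  unfold pd
  have C1 : ContDiff ℝ 1 (Nk k) := (Nk_contDiff k).of_le (by norm_num)
  rw [((Nk_hcs k).hasFDerivAt_convolution_left _ C1 hf x).fderiv]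
  rw [convolution_def]
  have ex := ((Nk_hcs k).fderiv ℝ).convolutionExists_left
    ((ContinuousLinearMap.lsmul ℝ ℝ).precompL E3) (C1.continuous_fderiv (by norm_num)) hf x
  rw [ContinuousLinearMap.integral_apply ex]
  rfl

lemma moll_tendsto {f : E3 → ℝ} (hf : LocallyIntegrable f volume) :
    ∀ᵐ x, Tendsto (fun k => moll k f x) atTop (𝓝 (f x)) := by
  simp only [moll_eq]
  refine ContDiffBump.ae_convolution_tendsto_right_of_locallyIntegrable (φ := bumpk) (K := 2) ?_ ?_ hf
  · change Tendsto (fun k => 2 * epsk k) atTop (𝓝 0)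
    simpa using epsk_tendsto.const_mul 2
  · exact Eventually.of_forall fun k => le_rfl

lemma moll_abs_le (k : ℕ) {f : E3 → ℝ} {C : ℝ} (hC : ∀ᵐ x, |f x| ≤ C) (x : E3) :
    |moll k f x| ≤ C := by
  have h' : ∀ᵐ y, |f (x - y)| ≤ C :=
    (quasiMeasurePreserving_sub_left volume x).ae hC
  calc |moll k f x| ≤ ∫ y, Nk k y * C := by
        rw [← Real.norm_eq_abs]
        refine norm_integral_le_of_norm_le ((Nk_integrable k).mul_const C) ?_
        filter_upwards [h'] with y hy
        rw [norm_mul, Real.norm_of_nonneg (Nk_nonneg k y)]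
        exact mul_le_mul_of_nonneg_left hy (Nk_nonneg k y)
    _ = C := by rw [integral_mul_const, Nk_int, one_mul]

lemma moll_nonneg (k : ℕ) {f : E3 → ℝ} (h : ∀ x, 0 ≤ f x) (x : E3) : 0 ≤ moll k f x :=
  integral_nonneg fun y => mul_nonneg (Nk_nonneg k y) (h _)


lemma Nkr_contDiff (k : ℕ) (x : E3) : ContDiff ℝ ∞ (fun y => Nk k (x - y)) :=
  (Nk_contDiff k).comp (contDiff_const.sub contDiff_id)

lemma Nkr_hcs (k : ℕ) (x : E3) : HasCompactSupport (fun y => Nk k (x - y)) :=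
  (Nk_hcs k).comp_homeomorph (Homeomorph.subLeft x)

lemma Nkr_pd (k : ℕ) (x : E3) (i : Fin 3) (y : E3) :
    pd (fun y => Nk k (x - y)) i y = - pd (Nk k) i (x - y) := by
  unfold pd
  have h1 : HasFDerivAt (Nk k) (fderiv ℝ (Nk k) (x - y)) (x - y) :=
    ((Nk_contDiff k).differentiable (by norm_num) _).hasFDerivAt
  have h2 : HasFDerivAt (fun y : E3 => x - y) (-(ContinuousLinearMap.id ℝ E3)) y :=
    (hasFDerivAt_id y).const_sub x
  have := (h1.comp y h2).fderiv
  change fderiv ℝ (Nk k ∘ fun y => x - y) y _ = _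
  rw [this]
  simp

lemma integrable_bdd_mul_test {g f : E3 → ℝ} {C : ℝ} (hg : AEStronglyMeasurable g volume)
    (hC : ∀ᵐ x, |g x| ≤ C) (hf : Continuous f) (hfc : HasCompactSupport f) :
    Integrable (fun x => g x * f x) volume :=
  (hf.integrable_of_hasCompactSupport hfc).bdd_mul hg hC

lemma locallyIntegrable_of_bdd {g : E3 → ℝ} {C : ℝ} (hg : AEStronglyMeasurable g volume)
    (hC : ∀ᵐ x, |g x| ≤ C) : LocallyIntegrable g volume := by
  rw [locallyIntegrable_iff]
  intro K hK
  have : IsFiniteMeasure (volume.restrict K) := ⟨by simpa using hK.measure_lt_top⟩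
  exact Integrable.of_bound hg.restrict C (ae_restrict_of_ae hC)

lemma pd_moll_weak (k : ℕ) {F dF : E3 → ℝ} (hF : LocallyIntegrable F volume) (i : Fin 3)
    (hw : ∀ φ : E3 → ℝ, ContDiff ℝ ∞ φ → HasCompactSupport φ →
      ∫ x, F x * pd φ i x = - ∫ x, dF x * φ x) (x : E3) :
    pd (moll k F) i x = moll k dF x := by
  rw [pd_moll k hF]
  have h := hw _ (Nkr_contDiff k x) (Nkr_hcs k x)
  simp only [Nkr_pd] at h
  have e1 : ∫ y, pd (Nk k) i y * F (x - y) = ∫ y, F y * pd (Nk k) i (x - y) := by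
    rw [← integral_sub_left_eq_self (fun y => F y * pd (Nk k) i (x - y)) volume x]
    congr 1
    ext y
    simp [mul_comm]
  have e2 : moll k dF x = ∫ y, dF y * Nk k (x - y) := by
    unfold moll
    rw [← integral_sub_left_eq_self (fun y => dF y * Nk k (x - y)) volume x]
    congr 1
    ext y
    simp [mul_comm]
  simp only [mul_neg, integral_neg, neg_inj] at h
  rw [e1, e2, h]

namespace Setup
variable {M : ℝ} {R : E3 → ℝ} {U : E3 → Fin 3 → ℝ} {D : E3 → Fin 3 → Fin 3 → ℝ}
    {v : ℕ → E3 → Fin 3 → ℝ}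

lemma mass_weak (S : Setup M R U D v) {F : E3 → ℝ} {dF : Fin 3 → E3 → ℝ} {C : ℝ}
    (hF : LocallyIntegrable F volume) (hFc : HasCompactSupport F)
    (hdF : ∀ i, AEStronglyMeasurable (dF i) volume) (hb : ∀ i, ∀ᵐ x, |dF i x| ≤ C)
    (hw : ∀ φ : E3 → ℝ, ContDiff ℝ ∞ φ → HasCompactSupport φ → ∀ i,
      ∫ x, F x * pd φ i x = - ∫ x, dF i x * φ x) :
    ∫ x, ∑ i, R x * U x i * dF i x = 0 := by
  have hl : ∀ i, LocallyIntegrable (dF i) volume := fun i =>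
    locallyIntegrable_of_bdd (hdF i) (hb i)
  have c1 : CV 1 (fun k x => ∑ i, moll k (dF i) x * (R x * U x i))
      (fun x => ∑ i, dF i x * (R x * U x i)) := by
    refine CV.sum le_rfl _ fun i _ => ?_
    refine CV.bdd_mul le_rfl (by norm_num) (C := C) (fun k => ?_) (fun k x => ?_) ?_
      (CV.const (memLp_one_iff_integrable.2 (S.RU1 i)))
    · exact (moll_contDiff k (hl i)).continuous.aestronglyMeasurable
    · exact moll_abs_le k (hb i) x
    · exact moll_tendsto (hl i)
  have z : ∀ k, ∫ x, ∑ i, moll k (dF i) x * (R x * U x i) = 0 := by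
    intro k
    have := S.mass (moll k F) (moll_contDiff k hF) (moll_hcs k hFc)
    rw [← this]
    congr 1
    ext x
    rw [Finset.mul_sum]
    refine Finset.sum_congr rfl fun i _ => ?_
    rw [pd_moll_weak k hF i (fun φ h1 h2 => hw φ h1 h2 i)]
    ring
  have c2 := c1.integral
  simp only [z] at c2
  have := tendsto_nhds_unique c2 tendsto_const_nhds
  rw [← this]
  congr 1
  ext x
  refine Finset.sum_congr rfl fun i _ => by ring

end Setup

/-- Regularised indicator of `w ≠ 0`. -/
def psie (e : ℝ) (w : Fin 3 → ℝ) : ℝ := (∑ l, w l ^ 2) / (e ^ 2 + ∑ l, w l ^ 2)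

def be (e : ℝ) (l : Fin 3) (w : Fin 3 → ℝ) : ℝ := 2 * e ^ 2 * w l / (e ^ 2 + ∑ l, w l ^ 2) ^ 2

lemma psie_den_pos {e : ℝ} (he : 0 < e) (w : Fin 3 → ℝ) : 0 < e ^ 2 + ∑ l, w l ^ 2 := by positivity

lemma psie_abs_le {e : ℝ} (he : 0 < e) (w : Fin 3 → ℝ) : |psie e w| ≤ 1 := by
  have h := psie_den_pos he w
  have h2 : 0 ≤ ∑ l, w l ^ 2 := by positivity
  unfold psie
  rw [abs_of_nonneg (by positivity), div_le_one h]
  nlinarith [sq_nonneg e]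

lemma sq_le_q (w : Fin 3 → ℝ) (l : Fin 3) : w l ^ 2 ≤ ∑ l, w l ^ 2 :=
  Finset.single_le_sum (f := fun l => w l ^ 2) (fun i _ => sq_nonneg _) (Finset.mem_univ l)

lemma be_abs_le {e : ℝ} (he : 0 < e) (l : Fin 3) (w : Fin 3 → ℝ) : |be e l w| ≤ e⁻¹ := by
  have h := psie_den_pos he w
  have h2 := sq_le_q w l
  unfold be
  set q := ∑ l, w l ^ 2
  have h3 : 0 ≤ q := (sq_nonneg _).trans h2
  rw [abs_div, abs_of_pos (pow_pos h 2), abs_mul, abs_of_nonneg (show 0 ≤ 2 * e ^ 2 by positivity),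
    div_le_iff₀ (pow_pos h 2)]
  have h4 : 2 * e * |w l| ≤ e ^ 2 + q := by nlinarith [sq_nonneg (e - |w l|), sq_abs (w l)]
  have h5 : e * (2 * e ^ 2 * |w l|) ≤ (e ^ 2 + q) ^ 2 := by
    have : e ^ 2 * (2 * e * |w l|) ≤ (e ^ 2 + q) * (e ^ 2 + q) :=
      mul_le_mul (by linarith) h4 (by positivity) h.le
    nlinarith
  rw [inv_mul_eq_div, le_div_iff₀ he]
  linarith

lemma mul_be_abs_le {e : ℝ} (he : 0 < e) (i l : Fin 3) (w : Fin 3 → ℝ) :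
    |w i * be e l w| ≤ 1 := by
  have h := psie_den_pos he w
  have h1 := sq_le_q w i
  have h2 := sq_le_q w l
  unfold be
  set q := ∑ l, w l ^ 2
  have h3 : 0 ≤ q := (sq_nonneg _).trans h2
  rw [mul_div_assoc', abs_div, abs_of_pos (pow_pos h 2), div_le_one (pow_pos h 2)]
  have : w i * (2 * e ^ 2 * w l) = e ^ 2 * (2 * w i * w l) := by ring
  rw [this, abs_mul, abs_of_nonneg (sq_nonneg e)]
  have h4 : |2 * w i * w l| ≤ 2 * q := by
    rw [abs_le]
    constructor <;> nlinarith [sq_nonneg (w i - w l), sq_nonneg (w i + w l)]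
  calc e ^ 2 * |2 * w i * w l| ≤ e ^ 2 * (2 * q) := by gcongr
    _ ≤ _ := by nlinarith [sq_nonneg (e ^ 2), sq_nonneg q]

lemma psie_contDiff {e : ℝ} (he : 0 < e) : ContDiff ℝ ∞ (psie e) := by
  unfold psie
  refine ContDiff.div ?_ ?_ fun w => (psie_den_pos he w).ne' <;> fun_prop

lemma be_continuous {e : ℝ} (he : 0 < e) (l : Fin 3) : Continuous (be e l) := by
  unfold be
  refine Continuous.div ?_ ?_ fun w => (pow_pos (psie_den_pos he w) 2).ne' <;> fun_prop

lemma pd_psie {e : ℝ} (he : 0 < e) {w : E3 → Fin 3 → ℝ} (hw : ContDiff ℝ ∞ w) (i : Fin 3) (x : E3) :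
    pd (fun y => psie e (w y)) i x = ∑ l, be e l (w x) * pd (fun y => w y l) i x := by
  have hwl : ∀ l, ContDiff ℝ ∞ (fun y => w y l) := fun l => contDiff_pi.1 hw l
  have dl : ∀ l, DifferentiableAt ℝ (fun y => w y l) x := fun l => (hwl l).differentiable (by norm_num) x
  have dq2 : ∀ l, DifferentiableAt ℝ (fun y => w y l * w y l) x := fun l => (dl l).fun_mul (dl l)
  have dP : DifferentiableAt ℝ (fun y => psie e (w y)) x :=
    ((psie_contDiff he).comp hw).differentiable (by norm_num) x
  have pq : pd (fun y => ∑ l, w y l * w y l) i x = ∑ l, 2 * w x l * pd (fun y => w y l) i x := by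
    rw [pd_sum _ fun l _ => dq2 l]
    refine Finset.sum_congr rfl fun l _ => ?_
    rw [pd_mul (dl l) (dl l)]
    ring
  have dq : DifferentiableAt ℝ (fun y => ∑ l, w y l * w y l) x := by
    refine DifferentiableAt.fun_sum fun l _ => dq2 l
  have pq' : pd (fun y => e ^ 2 + ∑ l, w y l * w y l) i x
      = pd (fun y => ∑ l, w y l * w y l) i x := by
    unfold pd
    rw [fderiv_const_add]
  have key := pd_mul dP (dq.const_add (e ^ 2)) i
  have e1 : (fun y => psie e (w y) * (e ^ 2 + ∑ l, w y l * w y l))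
      = fun y => ∑ l, w y l * w y l := by
    ext y
    have := psie_den_pos he (w y)
    unfold psie
    simp only [pow_two] at this ⊢
    field_simp
  rw [e1, pq', pq] at key
  have hd := psie_den_pos he (w x)
  have hp : psie e (w x) * (e ^ 2 + ∑ l, w x l ^ 2) = ∑ l, w x l ^ 2 := by
    unfold psie
    field_simp
  have e2 : ∑ l, be e l (w x) * pd (fun y => w y l) i x =
      e ^ 2 / (e ^ 2 + ∑ l, w x l ^ 2) ^ 2 * ∑ l, 2 * w x l * pd (fun y => w y l) i x := by
    rw [Finset.mul_sum]
    refine Finset.sum_congr rfl fun l _ => ?_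
    unfold be
    ring
  rw [e2]
  simp only [← pow_two] at key
  set q := ∑ l, w x l ^ 2
  set T := ∑ l, 2 * w x l * pd (fun y => w y l) i x
  set P := pd (fun y => psie e (w y)) i x
  have h3 : P * (e ^ 2 + q) ^ 2 = e ^ 2 * T := by
    have : (e ^ 2 + q) * P = T - psie e (w x) * T := by linarith
    calc P * (e ^ 2 + q) ^ 2 = ((e ^ 2 + q) * P) * (e ^ 2 + q) := by ring
      _ = T * (e ^ 2 + q) - T * (psie e (w x) * (e ^ 2 + q)) := by rw [this]; ring
      _ = _ := by rw [hp]; ring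
  field_simp
  linarith

namespace Setup
variable {M : ℝ} {R : E3 → ℝ} {U : E3 → Fin 3 → ℝ} {D : E3 → Fin 3 → Fin 3 → ℝ}
    {v : ℕ → E3 → Fin 3 → ℝ}

lemma RU2 (S : Setup M R U D v) (j : Fin 3) : MemLp (fun x => R x * U x j) 2 volume := by
  have := ht362
  exact (S.vU j).2.1.mul' (S.Rp (p := 3) (by norm_num))

lemma Um (S : Setup M R U D v) : AEMeasurable U volume :=
  aemeasurable_pi_iff.2 fun i => (S.vU i).2.1.1.aemeasurable

lemma force_aux (S : Setup M R U D v) {Ω : Set E3} (hv : ∀ n, tsupport (v n) ⊆ Ω)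
    {g : E3 → ℝ} {dg : E3 → Fin 3 → ℝ} {C : ℝ}
    (mg : AEStronglyMeasurable g volume) (bg : ∀ᵐ x, |g x| ≤ C)
    (mdg : ∀ i, AEStronglyMeasurable (fun x => dg x i) volume) (bdg : ∀ i, ∀ᵐ x, |dg x i| ≤ C)
    (hw : ∀ φ : E3 → ℝ, IsTest Ω φ → ∀ i, ∫ x, g x * pd φ i x = - ∫ x, dg x i * φ x)
    {e : ℝ} (he : 0 < e) (n : ℕ) :
    ∫ x, ∑ i, R x * U x i * (psie e (v n x) * dg x i
      + g x * ∑ l, be e l (v n x) * pd (fun y => v n y l) i x) = 0 := by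
  set P : E3 → ℝ := fun x => psie e (v n x) with hP
  have p0 : psie e 0 = 0 := by simp [psie]
  have Ps : ContDiff ℝ ∞ P := (psie_contDiff he).comp (S.vsm n)
  have Pc : HasCompactSupport P := (S.vcs n).comp_left p0
  have Pt : tsupport P ⊆ Ω := (tsupport_comp_subset p0 (v n)).trans (hv n)
  have Ppd : ∀ i x, ∑ l, be e l (v n x) * pd (fun y => v n y l) i x = pd P i x := by
    intro i x
    rw [hP, pd_psie he (S.vsm n)]
  have Pdc : ∀ i, Continuous (pd P i) := fun i => pd_continuous (Ps.of_le (by norm_num)) i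
  have Pdb : ∀ i, ∃ B, ∀ x, |pd P i x| ≤ B := fun i => by
    obtain ⟨B, hB⟩ := (Pdc i).bounded_above_of_compact_support (pd_hasCompactSupport Pc i)
    exact ⟨B, hB⟩
  choose B hB using Pdb
  simp only [Ppd]
  have C0 : 0 ≤ C := by
    obtain ⟨x, hx⟩ := bg.exists
    exact (abs_nonneg _).trans hx
  have B0 : ∀ i, 0 ≤ B i := fun i => (abs_nonneg _).trans (hB i 0)
  refine S.mass_weak (F := fun x => g x * P x) (dF := fun i x => P x * dg x i + g x * pd P i x)
    (C := C + ∑ i, C * B i) ?_ ?_ ?_ ?_ ?_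
  · refine locallyIntegrable_of_bdd (C := C) (mg.mul Ps.continuous.aestronglyMeasurable) ?_
    filter_upwards [bg] with x hx
    rw [abs_mul]
    calc _ ≤ C * 1 := mul_le_mul hx (psie_abs_le he _) (abs_nonneg _) C0
      _ = C := mul_one C
  · exact Pc.mul_left
  · exact fun i => (Ps.continuous.aestronglyMeasurable.mul (mdg i)).add
      (mg.mul (Pdc i).aestronglyMeasurable)
  · intro i
    filter_upwards [bg, bdg i] with x hx hx'
    refine (abs_add_le _ _).trans ?_
    rw [abs_mul, abs_mul]
    refine add_le_add ?_ ?_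
    · calc _ ≤ 1 * C := mul_le_mul (psie_abs_le he _) hx' (abs_nonneg _) zero_le_one
        _ = C := one_mul C
    · refine (mul_le_mul hx (hB i x) (abs_nonneg _) C0).trans ?_
      exact Finset.single_le_sum (f := fun i => C * B i)
        (fun j _ => mul_nonneg C0 (B0 j)) (Finset.mem_univ i)
  · intro φ hφ hφc i
    have hφ1 : ContDiff ℝ 1 φ := hφ.of_le (by norm_num)
    have := hw (fun x => P x * φ x) ⟨Ps.mul hφ, Pc.mul_right, 
      (tsupport_mul_subset_left).trans Pt⟩ i
    have e1 : ∀ x, pd (fun y => P y * φ y) i x = P x * pd φ i x + φ x * pd P i x := fun x =>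
      pd_mul (Ps.differentiable (by norm_num) x) (hφ.differentiable (by norm_num) x) i
    simp only [e1] at this
    have i1 : Integrable (fun x => g x * (P x * pd φ i x)) volume :=
      integrable_bdd_mul_test mg bg (Ps.continuous.mul (pd_continuous hφ1 i)) Pc.mul_right
    have i2 : Integrable (fun x => g x * (φ x * pd P i x)) volume :=
      integrable_bdd_mul_test mg bg (hφ.continuous.mul (Pdc i)) hφc.mul_right
    have i3 : Integrable (fun x => dg x i * (P x * φ x)) volume :=
      integrable_bdd_mul_test (mdg i) (bdg i) (Ps.continuous.mul hφ.continuous) Pc.mul_right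
    have e2 : ∫ x, g x * (P x * pd φ i x + φ x * pd P i x)
        = (∫ x, g x * (P x * pd φ i x)) + ∫ x, g x * (φ x * pd P i x) := by
      rw [← integral_add i1 i2]
      congr 1
      ext x
      ring
    have e3 : ∫ x, (P x * dg x i + g x * pd P i x) * φ x
        = (∫ x, dg x i * (P x * φ x)) + ∫ x, g x * (φ x * pd P i x) := by
      rw [← integral_add i3 i2]
      congr 1
      ext x
      ring
    have e4 : ∫ x, g x * P x * pd φ i x = ∫ x, g x * (P x * pd φ i x) := by
      congr 1
      ext x
      ring
    rw [e3, e4]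
    linarith

lemma force_W1inf (S : Setup M R U D v) {Ω : Set E3} (hv : ∀ n, tsupport (v n) ⊆ Ω)
    {g : E3 → ℝ} {dg : E3 → Fin 3 → ℝ} {C : ℝ}
    (mg : AEStronglyMeasurable g volume) (bg : ∀ᵐ x, |g x| ≤ C)
    (mdg : ∀ i, AEStronglyMeasurable (fun x => dg x i) volume) (bdg : ∀ i, ∀ᵐ x, |dg x i| ≤ C)
    (hw : ∀ φ : E3 → ℝ, IsTest Ω φ → ∀ i, ∫ x, g x * pd φ i x = - ∫ x, dg x i * φ x) :
    ∫ x, ∑ i, R x * dg x i * U x i = 0 := by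
  have vs : ∀ᵐ x, Tendsto (fun n => v n x) atTop (𝓝 (U x)) := S.vae
  have I1 : ∀ i, MemLp (fun x => R x * U x i * dg x i) 1 volume := fun i =>
    memLp_one_iff_integrable.2 ((S.RU1 i).mul_bdd (mdg i) (bdg i))
  have I2 : ∀ i, MemLp (fun x => R x * U x i * g x) 2 volume := fun i => by
    have h : MemLp g ⊤ volume := memLp_top_of_bound mg C bg
    exact h.mul' (S.RU2 i)
  have I3 : ∀ i l, MemLp (fun x => R x * g x * D x l i) 1 volume := fun i l => by
    have h : MemLp g ⊤ volume := memLp_top_of_bound mg C bg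
    have h' : MemLp (fun x => R x * g x) 2 volume := h.mul' (S.Rp (p := 2) (by norm_num))
    exact (S.vD l i).2.1.mul' h'
  have step1 : ∀ e : ℝ, 0 < e → ∫ x, ∑ i, (psie e (U x) * (R x * U x i * dg x i)
      + ∑ l, U x i * be e l (U x) * (R x * g x * D x l i)) = 0 := by
    intro e he
    have c1 : CV 1 (fun n x => ∑ i, (psie e (v n x) * (R x * U x i * dg x i)
        + ∑ l, (R x * U x i * g x) * (be e l (v n x) * pd (fun y => v n y l) i x)))
        (fun x => ∑ i, (psie e (U x) * (R x * U x i * dg x i)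
        + ∑ l, (R x * U x i * g x) * (be e l (U x) * D x l i))) := by
      refine CV.sum le_rfl _ fun i _ => CV.add le_rfl ?_ (CV.sum le_rfl _ fun l _ => ?_)
      · refine CV.bdd_mul le_rfl (by norm_num) (C := 1) (fun n => ?_) (fun n x => ?_) ?_
          (CV.const (I1 i))
        · exact ((psie_contDiff he).continuous.comp (S.vsm n).continuous).aestronglyMeasurable
        · exact psie_abs_le he _
        · filter_upwards [vs] with x hx
          exact ((psie_contDiff he).continuous.tendsto _).comp hx
      · refine CV.mul (p := 2) (q := 2) le_rfl (CV.const (I2 i)) ?_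
        refine CV.bdd_mul (by norm_num) (by norm_num) (C := e⁻¹) (fun n => ?_) (fun n x => ?_) ?_
          (S.vD l i)
        · exact ((be_continuous he l).comp (S.vsm n).continuous).aestronglyMeasurable
        · exact be_abs_le he _ _
        · filter_upwards [vs] with x hx
          exact ((be_continuous he l).tendsto _).comp hx
    have c2 := c1.integral
    have z : ∀ n, ∫ x, ∑ i, (psie e (v n x) * (R x * U x i * dg x i)
        + ∑ l, (R x * U x i * g x) * (be e l (v n x) * pd (fun y => v n y l) i x)) = 0 := by
      intro n
      rw [← S.force_aux hv mg bg mdg bdg hw he n]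
      congr 1
      ext x
      refine Finset.sum_congr rfl fun i _ => ?_
      rw [← Finset.mul_sum]
      ring
    simp only [z] at c2
    rw [tendsto_nhds_unique tendsto_const_nhds c2]
    congr 1
    ext x
    refine Finset.sum_congr rfl fun i _ => ?_
    congr 1
    refine Finset.sum_congr rfl fun l _ => ?_
    ring
  have c3 : CV 1 (fun k x => ∑ i, (psie (epsk k) (U x) * (R x * U x i * dg x i)
      + ∑ l, U x i * be (epsk k) l (U x) * (R x * g x * D x l i)))
      (fun x => ∑ i, ((if ∑ l, U x l ^ 2 = 0 then 0 else 1) * (R x * U x i * dg x i)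
      + ∑ l, 0 * (R x * g x * D x l i))) := by
    have key : ∀ x : E3, ∀ l, ∑ l, U x l ^ 2 = 0 → U x l = 0 := by
      intro x l h
      have := sq_le_q (U x) l
      rw [h] at this
      exact pow_eq_zero_iff (two_ne_zero) |>.1 (le_antisymm this (sq_nonneg _))
    have ep2 : Tendsto (fun k => epsk k ^ 2) atTop (𝓝 0) := by
      simpa using epsk_tendsto.pow 2
    refine CV.sum le_rfl _ fun i _ => CV.add le_rfl ?_ (CV.sum le_rfl _ fun l _ => ?_)
    · refine CV.bdd_mul le_rfl (by norm_num) (C := 1) (fun n => ?_) (fun n x => ?_) ?_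
          (CV.const (I1 i))
      · exact ((psie_contDiff (epsk_pos n)).continuous.measurable.comp_aemeasurable
          S.Um).aestronglyMeasurable
      · exact psie_abs_le (epsk_pos n) _
      · refine Eventually.of_forall fun x => ?_
        split_ifs with h
        · simp [psie, h]
        · unfold psie
          have : Tendsto (fun n => (∑ l, U x l ^ 2) / (epsk n ^ 2 + ∑ l, U x l ^ 2)) atTop
              (𝓝 ((∑ l, U x l ^ 2) / (0 + ∑ l, U x l ^ 2))) :=
            tendsto_const_nhds.div (ep2.add tendsto_const_nhds) (by simpa using h)
          simpa [div_self h] using this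
    · refine CV.bdd_mul le_rfl (by norm_num) (C := 1) (fun n => ?_) (fun n x => ?_) ?_
          (CV.const (I3 i l))
      · exact (((continuous_apply i).mul (be_continuous (epsk_pos n) l)).measurable.comp_aemeasurable
          S.Um).aestronglyMeasurable
      · exact mul_be_abs_le (epsk_pos n) _ _ _
      · refine Eventually.of_forall fun x => ?_
        by_cases h : ∑ l, U x l ^ 2 = 0
        · simp [key x i h]
        · unfold be
          have : Tendsto (fun n => U x i * (2 * epsk n ^ 2 * U x l / (epsk n ^ 2 + ∑ l, U x l ^ 2) ^ 2))
              atTop (𝓝 (U x i * (2 * 0 * U x l / (0 + ∑ l, U x l ^ 2) ^ 2))) := by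
            refine tendsto_const_nhds.mul (Tendsto.div ((ep2.const_mul 2).mul_const _)
              ((ep2.add tendsto_const_nhds).pow 2) (by simpa using h))
          simpa using this
  have c4 := c3.integral
  simp only [step1 _ (epsk_pos _)] at c4
  rw [tendsto_nhds_unique tendsto_const_nhds c4]
  congr 1
  ext x
  refine Finset.sum_congr rfl fun i _ => ?_
  split_ifs with h
  · have : U x i = 0 := by
      have := sq_le_q (U x) i
      rw [h] at this
      exact pow_eq_zero_iff (two_ne_zero) |>.1 (le_antisymm this (sq_nonneg _))
    simp [this]
  · simp
    ring

end Setup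


section Fub
variable {κ W a : E3 → ℝ} {C : ℝ}

lemma fub_int (hκ : Integrable κ volume) (hW : AEStronglyMeasurable W volume)
    (hC : ∀ x, |W x| ≤ C) (ha : Integrable a volume) :
    Integrable (fun p : E3 × E3 => W p.1 * (κ p.2 * a (p.1 - p.2))) (volume.prod volume) := by
  have h := hκ.convolution_integrand (ContinuousLinearMap.lsmul ℝ ℝ) ha
  exact Integrable.bdd_mul (c := C) h hW.comp_fst (Eventually.of_forall fun p => hC p.1)

lemma fub_swap (hκ : Integrable κ volume) (hW : AEStronglyMeasurable W volume)
    (hC : ∀ x, |W x| ≤ C) (ha : Integrable a volume) :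
    ∫ x, W x * ∫ y, κ y * a (x - y) = ∫ y, κ y * ∫ x, W x * a (x - y) := by
  have h := integral_integral_swap (f := fun x y => W x * (κ y * a (x - y)))
    (fub_int hκ hW hC ha)
  simp only [integral_const_mul] at h
  rw [h]
  congr 1
  ext y
  rw [← integral_const_mul]
  congr 1
  ext x
  ring

lemma fub_integrable (hκ : Integrable κ volume) (hW : AEStronglyMeasurable W volume)
    (hC : ∀ x, |W x| ≤ C) (ha : Integrable a volume) :
    Integrable (fun x => W x * ∫ y, κ y * a (x - y)) volume := by
  have h := (fub_int hκ hW hC ha).integral_prod_left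
  simpa only [integral_const_mul] using h

lemma fub_bound (hκ : Integrable κ volume) (hW : AEStronglyMeasurable W volume)
    (hC : ∀ x, |W x| ≤ C) (ha : Integrable a volume) :
    |∫ x, W x * ∫ y, κ y * a (x - y)| ≤ (∫ y, |κ y|) * (C * ∫ x, |a x|) := by
  rw [fub_swap hκ hW hC ha, ← integral_mul_const, ← Real.norm_eq_abs]
  refine norm_integral_le_of_norm_le (hκ.norm.mul_const _) (Eventually.of_forall fun y => ?_)
  rw [norm_mul]
  refine mul_le_mul_of_nonneg_left ?_ (norm_nonneg _)
  have h2 : ∫ x, |a (x - y)| = ∫ x, |a x| := integral_sub_right_eq_self (fun x => |a x|) y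
  rw [← h2, ← integral_const_mul]
  refine norm_integral_le_of_norm_le ((ha.comp_sub_right y).norm.const_mul C)
    (Eventually.of_forall fun x => ?_)
  rw [norm_mul]
  exact mul_le_mul_of_nonneg_right (hC x) (norm_nonneg _)

end Fub

lemma sum_single (a : E3) : a = ∑ j, a j • (EuclideanSpace.single j (1 : ℝ) : E3) := by
  ext i
  simp [Finset.sum_apply, Pi.single_apply]

lemma diff_eq_integral {V : E3 → ℝ} (hV : ContDiff ℝ ∞ V) (x a : E3) :
    V x - V (x - a) = ∫ t in Ioc (0 : ℝ) 1, ∑ j, a j * pd V j (x - t • a) := by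
  have V1 : ContDiff ℝ 1 V := hV.of_le (by norm_num)
  have hd : ∀ t ∈ uIcc (0 : ℝ) 1, HasDerivAt (fun t : ℝ => - V (x - t • a))
      (∑ j, a j * pd V j (x - t • a)) t := by
    intro t _
    have h1 : HasFDerivAt V (fderiv ℝ V (x - t • a)) (x - t • a) :=
      (hV.differentiable (by norm_num) _).hasFDerivAt
    have h2 : HasDerivAt (fun t : ℝ => x - t • a) (-((1 : ℝ) • a)) t :=
      ((hasDerivAt_id t).smul_const a).const_sub x
    have h3 := (h1.comp_hasDerivAt t h2).neg
    have e : ∑ j, a j * pd V j (x - t • a) = -(fderiv ℝ V (x - t • a)) (-((1 : ℝ) • a)) := by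
      rw [one_smul, map_neg, neg_neg]
      conv_rhs => rw [sum_single a]
      rw [map_sum]
      refine Finset.sum_congr rfl fun j _ => ?_
      rw [map_smul]
      congr 1
      unfold pd
      rw [← sum_single a]
    rw [e]
    exact h3
  have := intervalIntegral.integral_eq_sub_of_hasDerivAt hd (by
    apply Continuous.intervalIntegrable
    refine continuous_finset_sum _ fun j _ => continuous_const.mul ?_
    exact (pd_continuous V1 j).comp (by fun_prop))
  rw [intervalIntegral.integral_of_le zero_le_one] at this
  rw [this]
  simp
  ring

lemma tripl_bound {w R f : E3 → ℝ} {C : ℝ} (hC : ∀ x, |w x| ≤ C)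
    (hR : MemLp R 2 volume) (hf : MemLp f 2 volume) (a b : E3) :
    |∫ x, w x * (R (x - a) * f (x - b))| ≤ C * ((∫ x, R x ^ 2) + ∫ x, f x ^ 2) := by
  have C0 : 0 ≤ C := (abs_nonneg _).trans (hC 0)
  have i1 := hR.integrable_sq
  have i2 := hf.integrable_sq
  have e1 : ∫ x, R (x - a) ^ 2 = ∫ x, R x ^ 2 := integral_sub_right_eq_self (fun x => R x ^ 2) a
  have e2 : ∫ x, f (x - b) ^ 2 = ∫ x, f x ^ 2 := integral_sub_right_eq_self (fun x => f x ^ 2) b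
  have i1' : Integrable (fun x => R (x - a) ^ 2) volume := i1.comp_sub_right a
  have i2' : Integrable (fun x => f (x - b) ^ 2) volume := i2.comp_sub_right b
  rw [← e1, ← e2, ← integral_add i1' i2', ← integral_const_mul, ← Real.norm_eq_abs]
  refine norm_integral_le_of_norm_le ((i1'.add i2').const_mul C) (Eventually.of_forall fun x => ?_)
  rw [norm_mul]
  refine mul_le_mul (hC x) ?_ (norm_nonneg _) C0
  rw [Real.norm_eq_abs, abs_le]
  constructor <;> nlinarith [sq_nonneg (R (x - a) - f (x - b)), sq_nonneg (R (x - a) + f (x - b)),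
    sq_nonneg (R (x - a)), sq_nonneg (f (x-b))]

lemma tripl_tendsto {w : ℕ → E3 → ℝ} {w' R : E3 → ℝ} {C : ℝ} {f : ℕ → E3 → ℝ} {d : E3 → ℝ}
    (hw : ∀ k, Continuous (w k)) (hC : ∀ k x, |w k x| ≤ C)
    (hw' : ∀ᵐ x, Tendsto (fun k => w k x) atTop (𝓝 (w' x)))
    (hR : MemLp R 2 volume) (hf : CV 2 f d) {a b : ℕ → E3} (ha : Tendsto a atTop (𝓝 0))
    (hb : Tendsto b atTop (𝓝 0)) :
    Tendsto (fun k => ∫ x, w k x * (R (x - a k) * f k (x - b k))) atTop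
      (𝓝 (∫ x, w' x * (R x * d x))) := by
  refine CV.integral (CV.bdd_mul le_rfl (by norm_num) (fun k => (hw k).aestronglyMeasurable) hC hw' ?_)
  exact CV.mul (p := 2) (q := 2) le_rfl
    (CV.translate (by norm_num) (by norm_num) (CV.const hR) ha)
    (CV.translate (by norm_num) (by norm_num) hf hb)

lemma CV.sq_bdd {f : ℕ → E3 → ℝ} {d : E3 → ℝ} (h : CV 2 f d) : ∃ B, ∀ k, ∫ x, f k x ^ 2 ≤ B := by
  have := (CV.mul (p := 2) (q := 2) (r := 1) le_rfl h h).integral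
  obtain ⟨B, hB⟩ := this.bddAbove_range
  refine ⟨B, fun k => ?_⟩
  have := hB ⟨k, rfl⟩
  simpa only [pow_two] using this

lemma smul_eps_tendsto (z : E3) : Tendsto (fun k => epsk k • z) atTop (𝓝 0) := by
  simpa using epsk_tendsto.smul_const z

lemma diffquot_swap {w R V : E3 → ℝ} {C : ℝ} (hw : Continuous w) (hC : ∀ x, |w x| ≤ C)
    (hRm : Measurable R) (hR : Integrable R volume) (hV : ContDiff ℝ ∞ V)
    (hVc : HasCompactSupport V) (a : E3) :
    ∫ x, w x * (R (x - a) * (V x - V (x - a))) =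
      ∫ t in Ioc (0 : ℝ) 1, ∑ j, a j * ∫ x, w x * (R (x - a) * pd V j (x - t • a)) := by
  have V1 : ContDiff ℝ 1 V := hV.of_le (by norm_num)
  have hR' : Integrable (fun x => R (x - a)) volume := hR.comp_sub_right a
  have hB : ∀ j, ∃ B, ∀ x, |pd V j x| ≤ B := fun j => by
    obtain ⟨B, hB⟩ := (pd_continuous V1 j).bounded_above_of_compact_support
      (pd_hasCompactSupport hVc j)
    exact ⟨B, hB⟩
  choose B hB using hB
  have I : ∀ j, Integrable (fun p : E3 × ℝ => w p.1 * (R (p.1 - a) * pd V j (p.1 - p.2 • a)))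
      (volume.prod (volume.restrict (Ioc (0:ℝ) 1))) := by
    intro j
    have h1 : Integrable (fun p : E3 × ℝ => R (p.1 - a))
      (volume.prod (volume.restrict (Ioc (0:ℝ) 1))) := hR'.comp_fst _
    have h2 : Integrable (fun p : E3 × ℝ => R (p.1 - a) * pd V j (p.1 - p.2 • a))
      (volume.prod (volume.restrict (Ioc (0:ℝ) 1))) := by
      refine h1.mul_bdd (c := B j) ?_ (Eventually.of_forall fun p => hB j _)
      exact ((pd_continuous V1 j).comp (by fun_prop)).aestronglyMeasurable
    exact h2.bdd_mul (c := C) (hw.comp continuous_fst).aestronglyMeasurable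
      (Eventually.of_forall fun p => hC _)
  have I' : ∀ j, Integrable (fun p : E3 × ℝ =>
      a j * (w p.1 * (R (p.1 - a) * pd V j (p.1 - p.2 • a))))
      (volume.prod (volume.restrict (Ioc (0:ℝ) 1))) := fun j => (I j).const_mul _
  have IS : Integrable (fun p : E3 × ℝ =>
      ∑ j, a j * (w p.1 * (R (p.1 - a) * pd V j (p.1 - p.2 • a))))
      (volume.prod (volume.restrict (Ioc (0:ℝ) 1))) := integrable_finset_sum _ fun j _ => I' j
  have hsw := integral_integral_swap (f := fun (x : E3) (t : ℝ) =>
    ∑ j, a j * (w x * (R (x - a) * pd V j (x - t • a)))) IS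
  calc ∫ x, w x * (R (x - a) * (V x - V (x - a)))
      = ∫ x, ∫ t in Ioc (0 : ℝ) 1, ∑ j, a j * (w x * (R (x - a) * pd V j (x - t • a))) := by
        congr 1
        ext x
        rw [diff_eq_integral hV, ← integral_const_mul, ← integral_const_mul]
        congr 1
        ext t
        rw [Finset.mul_sum, Finset.mul_sum]
        refine Finset.sum_congr rfl fun j _ => by ring
    _ = _ := by
        rw [hsw]
        refine integral_congr_ae ?_
        have hj : ∀ j, ∀ᵐ t ∂(volume.restrict (Ioc (0:ℝ) 1)),
            Integrable (fun x => a j * (w x * (R (x - a) * pd V j (x - t • a)))) volume :=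
          fun j => (I' j).prod_left_ae
        filter_upwards [ae_all_iff.2 hj] with t ht
        rw [integral_finset_sum _ fun j _ => ht j]
        refine Finset.sum_congr rfl fun j _ => integral_const_mul _ _

/-- Limit of the commutator. -/
lemma comm_tendsto {w V : ℕ → E3 → ℝ} {w' R : E3 → ℝ} {d : E3 → Fin 3 → ℝ} {C : ℝ}
    (hw : ∀ k, Continuous (w k)) (hC : ∀ k x, |w k x| ≤ C)
    (hw' : ∀ᵐ x, Tendsto (fun k => w k x) atTop (𝓝 (w' x)))
    (hRm : Measurable R) (hR : Integrable R volume) (hR2 : MemLp R 2 volume)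
    (hV : ∀ k, ContDiff ℝ ∞ (V k)) (hVc : ∀ k, HasCompactSupport (V k))
    (hf : ∀ j, CV 2 (fun k x => pd (V k) j x) (fun x => d x j)) (i : Fin 3) :
    Tendsto (fun k => ∫ y, pd (Nk k) i y *
      ∫ x, w k x * (R (x - y) * (V k x - V k (x - y)))) atTop
      (𝓝 (- ∫ x, w' x * (R x * d x i))) := by
  have C0 : 0 ≤ C := (abs_nonneg _).trans (hC 0 0)
  set L : Fin 3 → ℝ := fun j => ∫ x, w' x * (R x * d x j) with hL
  have hB := fun j => (hf j).sq_bdd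
  choose B hB using hB
  set B' : Fin 3 → ℝ := fun j => C * ((∫ x, R x ^ 2) + B j) with hB'
  have V1 : ∀ k, ContDiff ℝ 1 (V k) := fun k => (hV k).of_le (by norm_num)
  have hY : ∀ k (z : E3) (t : ℝ) j,
      |∫ x, w k x * (R (x - epsk k • z) * pd (V k) j (x - t • epsk k • z))| ≤ B' j := by
    intro k z t j
    refine (tripl_bound (hC k) hR2 ((hf j).1 k) _ _).trans ?_
    exact mul_le_mul_of_nonneg_left (by linarith [hB j k]) C0
  have hT : ∀ k z, (epsk k)⁻¹ * ∫ x, w k x * (R (x - epsk k • z) * (V k x - V k (x - epsk k • z)))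
      = ∫ t in Ioc (0 : ℝ) 1, ∑ j, z j *
        ∫ x, w k x * (R (x - epsk k • z) * pd (V k) j (x - t • epsk k • z)) := by
    intro k z
    rw [diffquot_swap (hw k) (hC k) hRm hR (hV k) (hVc k), ← integral_const_mul]
    congr 1
    ext t
    rw [Finset.mul_sum]
    refine Finset.sum_congr rfl fun j _ => ?_
    have := (epsk_pos k).ne'
    simp only [PiLp.smul_apply, smul_eq_mul]
    field_simp
  have hbd : ∀ k (z : E3) (t : ℝ), ‖∑ j, z j *
        ∫ x, w k x * (R (x - epsk k • z) * pd (V k) j (x - t • epsk k • z))‖ ≤ ∑ j, |z j| * B' j := by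
    intro k z t
    refine (norm_sum_le _ _).trans (Finset.sum_le_sum fun j _ => ?_)
    rw [norm_mul]
    exact mul_le_mul_of_nonneg_left (hY k z t j) (norm_nonneg _)
  have hTlim : ∀ z : E3, Tendsto (fun k => ∫ t in Ioc (0 : ℝ) 1, ∑ j, z j *
        ∫ x, w k x * (R (x - epsk k • z) * pd (V k) j (x - t • epsk k • z))) atTop
        (𝓝 (∑ j, z j * L j)) := by
    intro z
    have : ∑ j, z j * L j = ∫ t in Ioc (0 : ℝ) 1, ∑ j, z j * L j := by simp
    rw [this]
    refine tendsto_integral_of_dominated_convergence (fun _ => ∑ j, |z j| * B' j) (fun k => ?_)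
      (by simp) (fun k => Eventually.of_forall fun t => hbd k z t)
      (Eventually.of_forall fun t => ?_)
    · refine (StronglyMeasurable.aestronglyMeasurable ?_)
      refine Finset.stronglyMeasurable_fun_sum _ fun j _ => StronglyMeasurable.const_mul ?_ _
      refine StronglyMeasurable.integral_prod_right (f := fun (t : ℝ) (x : E3) =>
        w k x * (R (x - epsk k • z) * pd (V k) j (x - t • epsk k • z))) ?_
      refine Measurable.stronglyMeasurable ?_
      refine Measurable.mul ((hw k).measurable.comp measurable_snd) (Measurable.mul ?_ ?_)
      · exact hRm.comp (by fun_prop)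
      · exact (pd_continuous (V1 k) j).measurable.comp (by fun_prop)
    · refine tendsto_finset_sum _ fun j _ => tendsto_const_nhds.mul ?_
      refine tripl_tendsto hw hC hw' hR2 (hf j) (smul_eps_tendsto z) ?_
      simpa using (smul_eps_tendsto z).const_smul t
  have esc : (fun k => ∫ y, pd (Nk k) i y *
      ∫ x, w k x * (R (x - y) * (V k x - V k (x - y)))) = fun k => ∫ z, pd (Nk 0) i z *
      ((epsk k)⁻¹ * ∫ x, w k x * (R (x - epsk k • z) * (V k x - V k (x - epsk k • z)))) := by
    funext k
    exact integral_pdNk_scale k i _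
  rw [esc]
  have fin : - L i = ∫ z, pd (Nk 0) i z * ∑ j, z j * L j := by
    have Nc : Continuous (pd (Nk 0) i) := pd_continuous ((Nk_contDiff 0).of_le (by norm_num)) i
    have e : ∀ z : E3, pd (Nk 0) i z * ∑ j, z j * L j = ∑ j, (pd (Nk 0) i z * z j) * L j := by
      intro z
      rw [Finset.mul_sum]
      refine Finset.sum_congr rfl fun j _ => by ring
    simp only [e]
    rw [integral_finset_sum]
    · simp only [integral_mul_const, integral_pdN0_coord]
      simp
    · intro j _
      refine Integrable.mul_const ?_ _
      exact (Nc.mul (by fun_prop)).integrable_of_hasCompactSupport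
        (pd_hasCompactSupport (Nk_hcs 0) i).mul_right
  rw [fin]
  have Nc : Continuous (pd (Nk 0) i) := pd_continuous ((Nk_contDiff 0).of_le (by norm_num)) i
  refine tendsto_integral_of_dominated_convergence
    (fun z => |pd (Nk 0) i z| * ∑ j, |z j| * B' j) (fun k => ?_) ?_ (fun k => ?_) ?_
  · refine Nc.aestronglyMeasurable.mul (AEStronglyMeasurable.const_mul ?_ _)
    refine (StronglyMeasurable.aestronglyMeasurable ?_)
    refine StronglyMeasurable.integral_prod_right (f := fun (z : E3) (x : E3) =>
        w k x * (R (x - epsk k • z) * (V k x - V k (x - epsk k • z)))) ?_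
    refine Measurable.stronglyMeasurable ?_
    refine Measurable.mul ((hw k).measurable.comp measurable_snd) (Measurable.mul ?_
      (Measurable.sub ?_ ?_))
    · exact hRm.comp (by fun_prop)
    · exact (hV k).continuous.measurable.comp measurable_snd
    · exact (hV k).continuous.measurable.comp (by fun_prop)
  · refine Continuous.integrable_of_hasCompactSupport ?_ ?_
    · exact Nc.abs.mul (by fun_prop)
    · exact (HasCompactSupport.comp_left (g := fun r : ℝ => |r|)
        (pd_hasCompactSupport (Nk_hcs 0) i) abs_zero).mul_right
  · refine Eventually.of_forall fun z => ?_
    rw [hT, norm_mul]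
    refine mul_le_mul_of_nonneg_left ?_ (norm_nonneg _)
    refine (norm_integral_le_of_norm_le_const (C := ∑ j, |z j| * B' j)
      (Eventually.of_forall fun t => hbd k z t)).trans ?_
    simp
  · refine Eventually.of_forall fun z => ?_
    simp only [hT]
    exact tendsto_const_nhds.mul (hTlim z)

/-- Limit of the left-hand side. -/
lemma left_tendsto {w f : ℕ → E3 → ℝ} {w' R d : E3 → ℝ} {C : ℝ}
    (hw : ∀ k, Continuous (w k)) (hC : ∀ k x, |w k x| ≤ C)
    (hw' : ∀ᵐ x, Tendsto (fun k => w k x) atTop (𝓝 (w' x)))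
    (hRm : Measurable R) (hR : Integrable R volume) (hR2 : MemLp R 2 volume)
    (hfc : ∀ k, Continuous (f k)) (hfs : ∀ k, HasCompactSupport (f k)) (hf : CV 2 f d) :
    Tendsto (fun k => ∫ x, w k x * moll k R x * f k x) atTop (𝓝 (∫ x, w' x * (R x * d x))) := by
  obtain ⟨B, hB⟩ := hf.sq_bdd
  have C0 : 0 ≤ C := (abs_nonneg _).trans (hC 0 0)
  have e : ∀ k, ∫ x, w k x * moll k R x * f k x =
      ∫ z, Nk 0 z * ∫ x, w k x * (R (x - epsk k • z) * f k (x - 0)) := by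
    intro k
    obtain ⟨b, hb⟩ := (hfc k).bounded_above_of_compact_support (hfs k)
    have : ∀ x, |w k x * f k x| ≤ C * b := fun x => by
      rw [abs_mul]
      exact mul_le_mul (hC k x) (hb x) (abs_nonneg _) C0
    have h := fub_swap (κ := Nk k) (W := fun x => w k x * f k x) (a := R) (Nk_integrable k)
      ((hw k).mul (hfc k)).aestronglyMeasurable this hR
    rw [integral_Nk_scale] at h
    calc _ = ∫ x, w k x * f k x * ∫ y, Nk k y * R (x - y) := by
          congr 1
          ext x
          unfold moll
          ring
      _ = _ := by
          rw [h]
          congr 1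
          ext z
          congr 2
          ext x
          rw [sub_zero]
          ring
  simp only [e]
  have fin : ∫ x, w' x * (R x * d x) = ∫ z, Nk 0 z * ∫ x, w' x * (R x * d x) := by
    rw [integral_mul_const, Nk_int, one_mul]
  rw [fin]
  refine tendsto_integral_of_dominated_convergence
    (fun z => Nk 0 z * (C * ((∫ x, R x ^ 2) + B))) (fun k => ?_) ((Nk_integrable 0).mul_const _)
    (fun k => Eventually.of_forall fun z => ?_) (Eventually.of_forall fun z => ?_)
  · refine (Nk_contDiff 0).continuous.aestronglyMeasurable.mul ?_
    refine (StronglyMeasurable.aestronglyMeasurable ?_)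
    refine StronglyMeasurable.integral_prod_right (f := fun (z : E3) (x : E3) =>
        w k x * (R (x - epsk k • z) * f k (x - 0))) ?_
    refine Measurable.stronglyMeasurable ?_
    refine Measurable.mul ((hw k).measurable.comp measurable_snd) (Measurable.mul ?_ ?_)
    · exact hRm.comp (by fun_prop)
    · exact (hfc k).measurable.comp (by fun_prop)
  · rw [norm_mul, Real.norm_of_nonneg (Nk_nonneg 0 z)]
    refine mul_le_mul_of_nonneg_left ?_ (Nk_nonneg 0 z)
    refine (tripl_bound (hC k) hR2 (hf.1 k) _ _).trans ?_
    exact mul_le_mul_of_nonneg_left (by linarith [hB k]) C0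
  · refine tendsto_const_nhds.mul ?_
    exact tripl_tendsto hw hC hw' hR2 hf (smul_eps_tendsto z) tendsto_const_nhds


lemma CV.integral_abs {f : ℕ → E3 → ℝ} {g : E3 → ℝ} (h : CV 1 f g) :
    Tendsto (fun n => ∫ x, |f n x - g x|) atTop (𝓝 0) := by
  have h1 := h.2.2
  have e : ∀ n, ∫ x, |f n x - g x| = (eLpNorm (fun x => f n x - g x) 1 volume).toReal := by
    intro n
    have m : AEStronglyMeasurable (fun x => f n x - g x) volume := ((h.1 n).sub h.2.1).1
    rw [eLpNorm_one_eq_lintegral_enorm, ← integral_norm_eq_lintegral_enorm m]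
    rfl
  simp only [e]
  have := (ENNReal.tendsto_toReal (a := 0) (by simp)).comp h1
  rw [ENNReal.toReal_zero] at this
  exact this

lemma pdNk_integrable (k : ℕ) (i : Fin 3) : Integrable (pd (Nk k) i) volume :=
  (pd_continuous ((Nk_contDiff k).of_le (by norm_num)) i).integrable_of_hasCompactSupport
    (pd_hasCompactSupport (Nk_hcs k) i)

lemma pd_comp {b b' : ℝ → ℝ} (hb : ∀ s, HasDerivAt b (b' s) s) {f : E3 → ℝ}
    (hf : ContDiff ℝ ∞ f) (i : Fin 3) (x : E3) :
    pd (fun y => b (f y)) i x = b' (f x) * pd f i x := by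
  unfold pd
  have h1 : HasFDerivAt f (fderiv ℝ f x) x := (hf.differentiable (by norm_num) x).hasFDerivAt
  have := ((hb (f x)).comp_hasFDerivAt x h1).fderiv
  change fderiv ℝ (b ∘ f) x _ = _
  rw [this]
  simp

namespace Setup
variable {M : ℝ} {R : E3 → ℝ} {U : E3 → Fin 3 → ℝ} {D : E3 → Fin 3 → Fin 3 → ℝ}
    {v : ℕ → E3 → Fin 3 → ℝ}

lemma mass_moll (S : Setup M R U D v) (k : ℕ) (x : E3) :
    ∑ i, ∫ y, pd (Nk k) i y * (R (x - y) * U (x - y) i) = 0 := by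
  have h := S.mass _ (Nkr_contDiff k x) (Nkr_hcs k x)
  simp only [Nkr_pd] at h
  have I : ∀ i, Integrable (fun y => R y * U y i * pd (Nk k) i (x - y)) volume := by
    intro i
    have c : Continuous (pd (Nk k) i) := pd_continuous ((Nk_contDiff k).of_le (by norm_num)) i
    obtain ⟨B, hB⟩ := c.bounded_above_of_compact_support (pd_hasCompactSupport (Nk_hcs k) i)
    refine (S.RU1 i).mul_bdd (c := B) ?_ (Eventually.of_forall fun y => hB _)
    exact (c.comp (by fun_prop)).aestronglyMeasurable
  have e1 : ∀ i, ∫ y, pd (Nk k) i y * (R (x - y) * U (x - y) i)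
      = ∫ y, R y * U y i * pd (Nk k) i (x - y) := by
    intro i
    rw [← integral_sub_left_eq_self (fun y => R y * U y i * pd (Nk k) i (x - y)) volume x]
    congr 1
    ext y
    simp [mul_comm]
  simp only [e1]
  rw [← integral_finset_sum _ fun i _ => I i, ← neg_eq_zero, ← integral_neg, ← h]
  congr 1
  ext y
  rw [Finset.mul_sum, ← Finset.sum_neg_distrib]
  refine Finset.sum_congr rfl fun i _ => by ring

lemma renorm_identity (S : Setup M R U D v) {g h : ℝ → ℝ} (hg : ∀ s, HasDerivAt g (h s) s)
    (hh : Continuous h) (k n : ℕ) {C : ℝ}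
    (hC : ∀ x, |g (moll k R x) + moll k R x * h (moll k R x)| ≤ C) :
    - ∫ x, g (moll k R x) * moll k R x * ∑ i, pd (fun y => v n y i) i x
    = (∑ i, ∫ x, (g (moll k R x) + moll k R x * h (moll k R x)) *
        ∫ y, pd (Nk k) i y * (fun x => R x * v n x i - R x * U x i) (x - y))
    + ∑ i, ∫ y, pd (Nk k) i y * ∫ x, (g (moll k R x) + moll k R x * h (moll k R x))
        * (R (x - y) * (v n x i - v n (x - y) i)) := by
  have Rl : LocallyIntegrable R volume := S.R1.locallyIntegrable
  set r := moll k R with hr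
  have rs : ContDiff ℝ ∞ r := moll_contDiff k Rl
  have gc : Continuous g := continuous_iff_continuousAt.2 fun s => (hg s).continuousAt
  set w : E3 → ℝ := fun x => g (r x) + r x * h (r x) with hw
  have wc : Continuous w :=
    (gc.comp rs.continuous).add (rs.continuous.mul (hh.comp rs.continuous))
  have wm := wc.aestronglyMeasurable (μ := (volume : Measure E3))
  have hC' : ∀ x, |w x| ≤ C := hC
  have C0 : 0 ≤ C := (abs_nonneg _).trans (hC 0)
  set b : ℝ → ℝ := fun s => g s * s with hb
  have hbd : ∀ s, HasDerivAt b (g s + s * h s) s := fun s => by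
    have := (hg s).mul (hasDerivAt_id s)
    have e : g s + s * h s = h s * id s + g s * 1 := by
      simp only [id]
      ring
    rw [e]
    exact this
  have b1 : ContDiff ℝ 1 b := by
    rw [contDiff_one_iff_deriv]
    refine ⟨fun s => (hbd s).differentiableAt, ?_⟩
    have : deriv b = fun s => g s + s * h s := funext fun s => (hbd s).deriv
    rw [this]
    exact gc.add (continuous_id.mul hh)
  have br1 : ContDiff ℝ 1 (fun x => b (r x)) := b1.comp (rs.of_le (by norm_num))
  have vi1 : ∀ i, ContDiff ℝ 1 (fun x => v n x i) := fun i => (S.vsmi n i).of_le (by norm_num)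
  have vb : ∀ i, ∃ B, ∀ x, |v n x i| ≤ B := fun i => by
    obtain ⟨B, hB⟩ := (S.vsmi n i).continuous.bounded_above_of_compact_support (S.vcsi n i)
    exact ⟨B, hB⟩
  choose B hB using vb
  have IRV : ∀ i, Integrable (fun x => R x * v n x i) volume := fun i =>
    S.R1.mul_bdd (S.vsmi n i).continuous.aestronglyMeasurable (Eventually.of_forall (hB i))
  have IRVU : ∀ i, Integrable (fun x => R x * v n x i - R x * U x i) volume := fun i =>
    (IRV i).sub (S.RU1 i)
  have wv : ∀ i x, |w x * v n x i| ≤ C * B i := fun i x => by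
    rw [abs_mul]
    exact mul_le_mul (hC' x) (hB i x) (abs_nonneg _) C0
  have wvm : ∀ i, AEStronglyMeasurable (fun x => w x * v n x i) volume := fun i =>
    (wc.mul (S.vsmi n i).continuous).aestronglyMeasurable
  have ibp : ∀ i, ∫ x, b (r x) * pd (fun y => v n y i) i x
      = - ∫ x, (w x * v n x i) * ∫ y, pd (Nk k) i y * R (x - y) := by
    intro i
    rw [pd_integral_by_parts br1 (vi1 i) (S.vcsi n i)]
    congr 2
    ext x
    rw [pd_comp hbd rs, hr, pd_moll k Rl]
    ring
  have ibpI : ∀ i, Integrable (fun x => b (r x) * pd (fun y => v n y i) i x) volume := fun i =>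
    (br1.continuous.mul (pd_continuous (vi1 i) i)).integrable_of_hasCompactSupport
      (pd_hasCompactSupport (S.vcsi n i) i).mul_left
  have lhs : - ∫ x, g (r x) * r x * ∑ i, pd (fun y => v n y i) i x
      = ∑ i, ∫ x, (w x * v n x i) * ∫ y, pd (Nk k) i y * R (x - y) := by
    have : ∀ x, g (r x) * r x * ∑ i, pd (fun y => v n y i) i x
      = ∑ i, b (r x) * pd (fun y => v n y i) i x := fun x => by
        rw [Finset.mul_sum]
    simp only [this]
    rw [integral_finset_sum _ fun i _ => ibpI i, ← Finset.sum_neg_distrib]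
    refine Finset.sum_congr rfl fun i _ => ?_
    rw [ibp, neg_neg]
  have massI : ∑ i, ∫ x, w x * ∫ y, pd (Nk k) i y * (fun x => R x * U x i) (x - y) = 0 := by
    rw [← integral_finset_sum _ fun i _ =>
      fub_integrable (pdNk_integrable k i) wm hC' (S.RU1 i)]
    simp only [← Finset.mul_sum, S.mass_moll k, mul_zero, integral_zero]
  have conv : ∀ {a : E3 → ℝ} (_ : Integrable a volume) i (x : E3),
      Integrable (fun y => pd (Nk k) i y * a (x - y)) volume := fun ha i x => by
        obtain ⟨b, hb⟩ := (pd_continuous ((Nk_contDiff k).of_le (by norm_num)) i).bounded_above_of_compact_support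
          (pd_hasCompactSupport (Nk_hcs k) i)
        exact (ha.comp_sub_left x).bdd_mul (pdNk_integrable k i).1 (Eventually.of_forall hb)
  have E : ∀ i, ∫ x, w x * ∫ y, pd (Nk k) i y * (fun x => R x * v n x i - R x * U x i) (x - y)
      = (∫ x, w x * ∫ y, pd (Nk k) i y * (fun x => R x * v n x i) (x - y))
        - ∫ x, w x * ∫ y, pd (Nk k) i y * (fun x => R x * U x i) (x - y) := by
    intro i
    rw [← integral_sub (fub_integrable (pdNk_integrable k i) wm hC' (IRV i))
      (fub_integrable (pdNk_integrable k i) wm hC' (S.RU1 i))]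
    congr 1
    ext x
    rw [← mul_sub, ← integral_sub (conv (IRV i) i x) (conv (S.RU1 i) i x)]
    congr 2
    ext y
    ring
  have Q : ∀ i, ∫ y, pd (Nk k) i y * ∫ x, w x * (R (x - y) * (v n x i - v n (x - y) i))
      = (∫ x, (w x * v n x i) * ∫ y, pd (Nk k) i y * R (x - y))
        - ∫ x, w x * ∫ y, pd (Nk k) i y * (fun x => R x * v n x i) (x - y) := by
    intro i
    have i1 := fub_int (pdNk_integrable k i) (wvm i) (wv i) S.R1
    have i2 := fub_int (pdNk_integrable k i) wm hC' (IRV i)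
    rw [fub_swap (pdNk_integrable k i) (wvm i) (wv i) S.R1,
      fub_swap (pdNk_integrable k i) wm hC' (IRV i)]
    have j1 := i1.integral_prod_right
    have j2 := i2.integral_prod_right
    have e1 : ∀ y, ∫ x, w x * v n x i * (pd (Nk k) i y * R (x - y))
        = pd (Nk k) i y * ∫ x, w x * v n x i * R (x - y) := fun y => by
      rw [← integral_const_mul]
      congr 1
      ext x
      ring
    have e2 : ∀ y, ∫ x, w x * (pd (Nk k) i y * (R (x - y) * v n (x - y) i))
        = pd (Nk k) i y * ∫ x, w x * (R (x - y) * v n (x - y) i) := fun y => by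
      rw [← integral_const_mul]
      congr 1
      ext x
      ring
    simp only [e1, e2] at j1 j2
    rw [← integral_sub j1 j2]
    congr 1
    ext y
    have k1 : Integrable (fun x => w x * v n x i * R (x - y)) volume :=
      (S.R1.comp_sub_right y).bdd_mul (wvm i) (Eventually.of_forall (wv i))
    have k2 : Integrable (fun x => w x * (R (x - y) * v n (x - y) i)) volume :=
      ((IRV i).comp_sub_right y).bdd_mul wm (Eventually.of_forall hC')
    rw [← mul_sub, ← integral_sub k1 k2]
    congr 2
    ext x
    ring
  rw [lhs]
  change _ = (∑ i, ∫ x, w x * ∫ y, pd (Nk k) i y * (fun x => R x * v n x i - R x * U x i) (x - y))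
    + ∑ i, ∫ y, pd (Nk k) i y * ∫ x, w x * (R (x - y) * (v n x i - v n (x - y) i))
  simp only [E, Q, Finset.sum_sub_distrib]
  rw [massI]
  ring

lemma renorm (S : Setup M R U D v) {g h : ℝ → ℝ} (hg : ∀ s, HasDerivAt g (h s) s)
    (hh : Continuous h) : ∫ x, (R x * h (R x)) * (R x * ∑ i, D x i i) = 0 := by
  have Rl : LocallyIntegrable R volume := S.R1.locallyIntegrable
  have gc : Continuous g := continuous_iff_continuousAt.2 fun s => (hg s).continuousAt
  have bc : Continuous (fun s => g s + s * h s) := gc.add (continuous_id.mul hh)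
  obtain ⟨C1, hC1⟩ := (isCompact_Icc (a := (0:ℝ)) (b := M)).exists_bound_of_continuousOn
    gc.continuousOn
  obtain ⟨C2, hC2⟩ := (isCompact_Icc (a := (0:ℝ)) (b := M)).exists_bound_of_continuousOn
    bc.continuousOn
  have rI : ∀ k x, moll k R x ∈ Icc 0 M := fun k x => ⟨moll_nonneg k S.R0 x,
    (le_abs_self _).trans (moll_abs_le k (Eventually.of_forall fun y => by
      rw [abs_of_nonneg (S.R0 y)]
      exact S.RM y) x)⟩
  have rc : ∀ k, Continuous (moll k R) := fun k => (moll_contDiff k Rl).continuous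
  have hCw : ∀ k x, |g (moll k R x) + moll k R x * h (moll k R x)| ≤ C2 := fun k x => hC2 _ (rI k x)
  have hCg : ∀ k x, |g (moll k R x)| ≤ C1 := fun k x => hC1 _ (rI k x)
  have C20 : 0 ≤ C2 := (abs_nonneg _).trans (hCw 0 0)
  have h65 := ht65
  have Verr : ∀ i, CV 1 (fun n x => R x * v n x i) (fun x => R x * U x i) := fun i =>
    CV.mul (p := ENNReal.ofReal (6/5)) (q := 6) le_rfl (CV.const (S.Rp one_le_65)) (S.vU i)
  have choice : ∀ k, ∃ n, k ≤ n ∧ |∑ i, ∫ x, (g (moll k R x) + moll k R x * h (moll k R x)) *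
        ∫ y, pd (Nk k) i y * (fun x => R x * v n x i - R x * U x i) (x - y)| ≤ epsk k := by
    intro k
    have T : Tendsto (fun n => ∑ i, (∫ y, |pd (Nk k) i y|) *
        (C2 * ∫ x, |R x * v n x i - R x * U x i|)) atTop
        (𝓝 (∑ i, (∫ y, |pd (Nk k) i y|) * (C2 * 0))) :=
      tendsto_finset_sum _ fun i _ => tendsto_const_nhds.mul
        (tendsto_const_nhds.mul (Verr i).integral_abs)
    simp only [mul_zero, Finset.sum_const_zero] at T
    obtain ⟨n, hn1, hn2⟩ := ((T.eventually (gt_mem_nhds (epsk_pos k))).and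
      (eventually_ge_atTop k)).exists
    refine ⟨n, hn2, le_trans ?_ hn1.le⟩
    refine (Finset.abs_sum_le_sum_abs _ _).trans (Finset.sum_le_sum fun i _ => ?_)
    refine fub_bound (a := fun x => R x * v n x i - R x * U x i) (pdNk_integrable k i) ?_ (hCw k) ?_
    · exact (bc.comp (rc k)).aestronglyMeasurable
    · exact memLp_one_iff_integrable.1 (((Verr i).1 n).sub (Verr i).2.1)
  choose ns hns1 hns2 using choice
  have hns : Tendsto ns atTop atTop := tendsto_atTop_mono hns1 tendsto_id
  have L1 : Tendsto (fun k => ∫ x, g (moll k R x) * moll k R x * ∑ i, pd (fun y => v (ns k) y i) i x)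
      atTop (𝓝 (∫ x, g (R x) * (R x * ∑ i, D x i i))) := by
    refine left_tendsto (fun k => gc.comp (rc k)) hCg ?_ S.Rm S.R1 (S.Rp (by norm_num)) ?_ ?_ ?_
    · filter_upwards [moll_tendsto Rl] with x hx
      exact (gc.tendsto _).comp hx
    · intro k
      exact continuous_finset_sum _ fun i _ => pd_continuous ((S.vsmi _ i).of_le (by norm_num)) i
    · intro k
      have : (fun x => ∑ i, pd (fun y => v (ns k) y i) i x)
          = ∑ i, pd (fun y => v (ns k) y i) i := by
        ext x
        simp
      rw [this]
      have hadd : ∀ i : Fin 3, HasCompactSupport (pd (fun y => v (ns k) y i) i) := fun i =>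
        pd_hasCompactSupport (S.vcsi _ i) i
      rw [Fin.sum_univ_three]
      exact ((hadd 0).add (hadd 1)).add (hadd 2)
    · exact CV.sum (by norm_num) _ fun i _ => (S.vD i i).subseq hns
  have L2 : ∀ i, Tendsto (fun k => ∫ y, pd (Nk k) i y *
      ∫ x, (g (moll k R x) + moll k R x * h (moll k R x))
        * (R (x - y) * (v (ns k) x i - v (ns k) (x - y) i))) atTop
      (𝓝 (- ∫ x, (g (R x) + R x * h (R x)) * (R x * D x i i))) := by
    intro i
    refine comm_tendsto (w := fun k x => g (moll k R x) + moll k R x * h (moll k R x))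
      (V := fun k x => v (ns k) x i) (d := fun x j => D x i j)
      (fun k => bc.comp (rc k)) hCw ?_ S.Rm S.R1 (S.Rp (by norm_num))
      (fun k => S.vsmi _ i) (fun k => S.vcsi _ i) (fun j => (S.vD i j).subseq hns) i
    filter_upwards [moll_tendsto Rl] with x hx
    exact (bc.tendsto _).comp hx
  have L3 : Tendsto (fun k => ∑ i, ∫ x, (g (moll k R x) + moll k R x * h (moll k R x)) *
        ∫ y, pd (Nk k) i y * (fun x => R x * v (ns k) x i - R x * U x i) (x - y)) atTop (𝓝 0) :=
    squeeze_zero_norm hns2 epsk_tendsto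
  have L4 := L3.add (tendsto_finset_sum Finset.univ fun i _ => L2 i)
  have L5 := L1.neg
  have eqs := fun k => S.renorm_identity hg hh k (ns k) (hCw k)
  have fin := tendsto_nhds_unique (L5.congr eqs) L4
  have IRD : ∀ i, Integrable (fun x => R x * D x i i) volume := fun i =>
    memLp_one_iff_integrable.1 ((S.vD i i).2.1.mul' (p := 2) (S.Rp (p := 2) (by norm_num)))
  have RI : ∀ x, R x ∈ Icc 0 M := fun x => ⟨S.R0 x, S.RM x⟩
  have IA : ∀ i, Integrable (fun x => g (R x) * (R x * D x i i)) volume := fun i =>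
    (IRD i).bdd_mul (gc.measurable.comp S.Rm).aestronglyMeasurable
      (Eventually.of_forall fun x => hC1 _ (RI x))
  have IB : ∀ i, Integrable (fun x => (g (R x) + R x * h (R x)) * (R x * D x i i)) volume := fun i =>
    (IRD i).bdd_mul (bc.measurable.comp S.Rm).aestronglyMeasurable
      (Eventually.of_forall fun x => hC2 _ (RI x))
  have e1 : ∫ x, (R x * h (R x)) * (R x * ∑ i, D x i i)
      = ∑ i, ((∫ x, (g (R x) + R x * h (R x)) * (R x * D x i i))
        - ∫ x, g (R x) * (R x * D x i i)) := by
    have IS : ∀ i, Integrable (fun x => (g (R x) + R x * h (R x)) * (R x * D x i i)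
        - g (R x) * (R x * D x i i)) volume := fun i => (IB i).sub (IA i)
    have e0 := fun i => integral_sub (IB i) (IA i)
    simp only [← e0]
    rw [← integral_finset_sum _ fun i _ => IS i]
    congr 1
    ext x
    rw [Finset.mul_sum, Finset.mul_sum]
    refine Finset.sum_congr rfl fun i _ => ?_
    ring
  have e2 : ∫ x, g (R x) * (R x * ∑ i, D x i i) = ∑ i, ∫ x, g (R x) * (R x * D x i i) := by
    rw [← integral_finset_sum _ fun i _ => IA i]
    congr 1
    ext x
    rw [Finset.mul_sum, Finset.mul_sum]
  rw [e1, Finset.sum_sub_distrib, ← e2]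
  rw [Finset.sum_neg_distrib] at fin
  linarith

end Setup


lemma pd_comm {f : E3 → ℝ} (hf : ContDiff ℝ ∞ f) (i j : Fin 3) (x : E3) :
    pd (pd f i) j x = pd (pd f j) i x := by
  have hs : IsSymmSndFDerivAt ℝ f x :=
    (hf.contDiffAt (x := x)).isSymmSndFDerivAt (by
      rw [minSmoothness_of_isRCLikeNormedField]
      exact WithTop.coe_le_coe.2 le_top)
  have hd : DifferentiableAt ℝ (fderiv ℝ f) x :=
    (hf.fderiv_right (m := ∞) (by simp)).differentiable (by norm_num) x
  have e : ∀ a b : Fin 3, pd (pd f a) b x =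
      fderiv ℝ (fderiv ℝ f) x (EuclideanSpace.single b 1) (EuclideanSpace.single a 1) := by
    intro a b
    have h1 := hd.hasFDerivAt.clm_apply
      (hasFDerivAt_const (EuclideanSpace.single a (1:ℝ) : E3) x)
    unfold pd
    rw [h1.fderiv]
    simp
  rw [e, e, hs]

lemma cross_eq {V : E3 → Fin 3 → ℝ} (hV : ∀ i, ContDiff ℝ ∞ (fun x => V x i))
    (hVc : ∀ i, HasCompactSupport (fun x => V x i)) (i j : Fin 3) :
    ∫ x, pd (fun y => V y i) j x * pd (fun y => V y j) i x
      = ∫ x, pd (fun y => V y i) i x * pd (fun y => V y j) j x := by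
  have o : ∀ {f : E3 → ℝ}, ContDiff ℝ ∞ f → ContDiff ℝ 1 f := fun hf => hf.of_le (by norm_num)
  have h1 := pd_integral_by_parts (o (pd_contDiff (hV j) i)) (o (hV i)) (hVc i) j
  have h2 := pd_integral_by_parts (o (pd_contDiff (hV j) j)) (o (hV i)) (hVc i) i
  have e1 : ∫ x, pd (fun y => V y i) j x * pd (fun y => V y j) i x
    = ∫ x, pd (fun y => V y j) i x * pd (fun y => V y i) j x := by
    congr 1
    ext x
    ring
  have e2 : ∫ x, pd (fun y => V y i) i x * pd (fun y => V y j) j x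
    = ∫ x, pd (fun y => V y j) j x * pd (fun y => V y i) i x := by
    congr 1
    ext x
    ring
  rw [e1, e2, h1, h2]
  congr 2
  ext x
  rw [pd_comm (hV j)]

lemma smat_pointwise (μ η : ℝ) (A : Fin 3 → Fin 3 → ℝ) :
    ∑ i, ∑ j, Smat μ η A i j * A i j = μ * (∑ i, ∑ j, A i j * A i j)
      + μ * (∑ i, ∑ j, A i j * A j i) + (η - 2 / 3 * μ) * (∑ i, ∑ j, A i i * A j j) := by
  simp only [Smat, Fin.sum_univ_three]
  simp
  ring

lemma coercive {μ η : ℝ} (hμ : 0 < μ) (hη : 0 ≤ η) {V : E3 → Fin 3 → ℝ}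
    (hV : ∀ i, ContDiff ℝ ∞ (fun x => V x i))
    (hVc : ∀ i, HasCompactSupport (fun x => V x i)) :
    μ * ∑ i, ∑ j, ∫ x, pd (fun y => V y i) j x * pd (fun y => V y i) j x
      ≤ ∫ x, ∑ i, ∑ j, Smat μ η (tgrad V x) i j * tgrad V x i j := by
  have I : ∀ i j a b, Integrable (fun x => pd (fun y => V y i) j x * pd (fun y => V y a) b x)
      volume := fun i j a b =>
    ((pd_continuous ((hV i).of_le (by norm_num)) j).mul
      (pd_continuous ((hV a).of_le (by norm_num)) b)).integrable_of_hasCompactSupport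
      (pd_hasCompactSupport (hVc i) j).mul_right
  simp only [smat_pointwise]
  simp only [tgrad]
  have s1 : Integrable (fun x => ∑ i, ∑ j, pd (fun y => V y i) j x * pd (fun y => V y i) j x) volume :=
    integrable_finset_sum _ fun i _ => integrable_finset_sum _ fun j _ => I _ _ _ _
  have s2 : Integrable (fun x => ∑ i, ∑ j, pd (fun y => V y i) j x * pd (fun y => V y j) i x) volume :=
    integrable_finset_sum _ fun i _ => integrable_finset_sum _ fun j _ => I _ _ _ _
  have s3 : Integrable (fun x => ∑ i, ∑ j, pd (fun y => V y i) i x * pd (fun y => V y j) j x) volume :=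
    integrable_finset_sum _ fun i _ => integrable_finset_sum _ fun j _ => I _ _ _ _
  have e1 : ∫ x, ∑ i, ∑ j, pd (fun y => V y i) j x * pd (fun y => V y i) j x
      = ∑ i, ∑ j, ∫ x, pd (fun y => V y i) j x * pd (fun y => V y i) j x := by
    rw [integral_finset_sum _ fun i _ => integrable_finset_sum _ fun j _ => I _ _ _ _]
    exact Finset.sum_congr rfl fun i _ => integral_finset_sum _ fun j _ => I _ _ _ _
  have e2 : ∫ x, ∑ i, ∑ j, pd (fun y => V y i) j x * pd (fun y => V y j) i x
      = ∑ i, ∑ j, ∫ x, pd (fun y => V y i) j x * pd (fun y => V y j) i x := by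
    rw [integral_finset_sum _ fun i _ => integrable_finset_sum _ fun j _ => I _ _ _ _]
    exact Finset.sum_congr rfl fun i _ => integral_finset_sum _ fun j _ => I _ _ _ _
  have e3 : ∫ x, ∑ i, ∑ j, pd (fun y => V y i) i x * pd (fun y => V y j) j x
      = ∑ i, ∑ j, ∫ x, pd (fun y => V y i) i x * pd (fun y => V y j) j x := by
    rw [integral_finset_sum _ fun i _ => integrable_finset_sum _ fun j _ => I _ _ _ _]
    exact Finset.sum_congr rfl fun i _ => integral_finset_sum _ fun j _ => I _ _ _ _
  have e23 : ∫ x, ∑ i, ∑ j, pd (fun y => V y i) j x * pd (fun y => V y j) i x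
      = ∫ x, ∑ i, ∑ j, pd (fun y => V y i) i x * pd (fun y => V y j) j x := by
    rw [e2, e3]
    exact Finset.sum_congr rfl fun i _ => Finset.sum_congr rfl fun j _ => cross_eq hV hVc i j
  have pos : 0 ≤ ∫ x, ∑ i, ∑ j, pd (fun y => V y i) i x * pd (fun y => V y j) j x := by
    refine integral_nonneg fun x => ?_
    have : ∑ i, ∑ j, pd (fun y => V y i) i x * pd (fun y => V y j) j x
        = (∑ i, pd (fun y => V y i) i x) * ∑ j, pd (fun y => V y j) j x := by
      rw [Finset.sum_mul_sum]
    change 0 ≤ ∑ i, ∑ j, pd (fun y => V y i) i x * pd (fun y => V y j) j x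
    rw [this]
    exact mul_self_nonneg _
  have s12 : Integrable (fun x => μ * ∑ i, ∑ j, pd (fun y => V y i) j x * pd (fun y => V y i) j x +
      μ * ∑ i, ∑ j, pd (fun y => V y i) j x * pd (fun y => V y j) i x) volume :=
    (s1.const_mul μ).add (s2.const_mul μ)
  rw [integral_add s12 (s3.const_mul _),
    integral_add (s1.const_mul _) (s2.const_mul _), integral_const_mul, integral_const_mul,
    integral_const_mul, e23, e1]
  nlinarith

lemma gns (V : E3 → ℝ) (hV : ContDiff ℝ ∞ V) (hVc : HasCompactSupport V) :
    eLpNorm V 6 volume ≤ SNormLESNormFDerivOfEqConst ℝ (volume : Measure E3) 2 *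
      ∑ j, eLpNorm (pd V j) 2 volume := by
  have V1 : ContDiff ℝ 1 V := hV.of_le (by norm_num)
  have h := eLpNorm_le_eLpNorm_fderiv_of_eq (μ := (volume : Measure E3)) (p := 2) (p' := 6) V1 hVc
    (by norm_num) (by simp) (by simp; norm_num)
  refine h.trans ?_
  refine mul_le_mul' le_rfl ?_
  have : eLpNorm (fderiv ℝ V) 2 volume ≤ eLpNorm (∑ j, fun x => |pd V j x|) 2 volume := by
    refine eLpNorm_mono_real fun x => ?_
    refine ContinuousLinearMap.opNorm_le_bound _ (by simp; positivity) fun a => ?_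
    conv_lhs => rw [sum_single a]
    rw [map_sum, Finset.sum_apply, Finset.sum_mul]
    refine (norm_sum_le _ _).trans (Finset.sum_le_sum fun j _ => ?_)
    rw [map_smul, norm_smul, mul_comm]
    refine mul_le_mul le_rfl ?_ (norm_nonneg _) (abs_nonneg _)
    exact PiLp.norm_apply_le a j
  have h2 : eLpNorm (∑ j, fun x => |pd V j x|) 2 volume
      ≤ ∑ j, eLpNorm (fun x => |pd V j x|) 2 volume :=
    eLpNorm_sum_le (fun j _ => (pd_continuous V1 j).abs.aestronglyMeasurable) (by norm_num)
  refine this.trans (h2.trans ?_)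
  refine Finset.sum_le_sum fun j _ => le_of_eq ?_
  exact eLpNorm_norm (pd V j)

lemma pressure_bound {p : ℝ → ℝ} (hp_cont : ContinuousOn p (Ici 0))
    (hp_sqrt : ∃ C > 0, ∀ s, 0 ≤ s → s < 1 → p s ≤ C * Real.sqrt s) (M : ℝ) :
    ∃ C, 0 ≤ C ∧ ∀ s, 0 ≤ s → s ≤ M → p s ≤ C * Real.sqrt s := by
  obtain ⟨C, hC, h⟩ := hp_sqrt
  obtain ⟨B, hB⟩ := (isCompact_Icc (a := (0:ℝ)) (b := M)).exists_bound_of_continuousOn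
    (hp_cont.mono Icc_subset_Ici_self)
  refine ⟨max C B, hC.le.trans (le_max_left _ _), fun s h0 hM => ?_⟩
  rcases lt_or_ge s 1 with h1 | h1
  · exact (h s h0 h1).trans (mul_le_mul_of_nonneg_right (le_max_left _ _) (Real.sqrt_nonneg _))
  · have h2 : 1 ≤ Real.sqrt s := Real.one_le_sqrt.2 h1
    have h3 : p s ≤ B := (le_abs_self _).trans (hB s ⟨h0, hM⟩)
    have h4 : 0 ≤ max C B := hC.le.trans (le_max_left _ _)
    calc p s ≤ max C B := h3.trans (le_max_right _ _)
      _ ≤ max C B * Real.sqrt s := le_mul_of_one_le_right h4 h2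

namespace Setup
variable {M : ℝ} {R : E3 → ℝ} {U : E3 → Fin 3 → ℝ} {D : E3 → Fin 3 → Fin 3 → ℝ}
    {v : ℕ → E3 → Fin 3 → ℝ}

lemma pressure_memLp (S : Setup M R U D v) {p : ℝ → ℝ} (hp_cont : ContinuousOn p (Ici 0))
    (hp_nonneg : ∀ s, 0 ≤ s → 0 ≤ p s)
    (hp_sqrt : ∃ C > 0, ∀ s, 0 ≤ s → s < 1 → p s ≤ C * Real.sqrt s) :
    MemLp (fun x => p (R x)) 2 volume := by
  obtain ⟨C, C0, hC⟩ := pressure_bound hp_cont hp_sqrt M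
  have pc : Continuous (fun s => p |s|) :=
    hp_cont.comp_continuous continuous_abs fun s => abs_nonneg s
  have e : (fun x => p (R x)) = fun x => p |R x| := by
    ext x
    rw [abs_of_nonneg (S.R0 x)]
  have m : Measurable (fun x => p (R x)) := by
    rw [e]
    exact pc.measurable.comp S.Rm
  rw [memLp_two_iff_integrable_sq m.aestronglyMeasurable]
  refine (S.R1.const_mul (C ^ 2)).mono' (m.pow_const 2).aestronglyMeasurable
    (Eventually.of_forall fun x => ?_)
  have h1 := hC _ (S.R0 x) (S.RM x)
  have h2 := hp_nonneg _ (S.R0 x)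
  rw [Real.norm_of_nonneg (sq_nonneg _)]
  calc p (R x) ^ 2 ≤ (C * Real.sqrt (R x)) ^ 2 := by gcongr
    _ = C ^ 2 * R x := by rw [mul_pow, Real.sq_sqrt (S.R0 x)]

lemma pressure_zero (S : Setup M R U D v) {p : ℝ → ℝ} (hp_cont : ContinuousOn p (Ici 0))
    (hp0 : p 0 = 0) (hP : MemLp (fun x => p (R x)) 2 volume) :
    ∫ x, p (R x) * ∑ i, D x i i = 0 := by
  have pc : Continuous (fun s => p |s|) :=
    hp_cont.comp_continuous continuous_abs fun s => abs_nonneg s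
  have hdiv : MemLp (fun x => ∑ i, D x i i) 2 volume :=
    memLp_finset_sum _ fun i _ => (S.vD i i).2.1
  have hI : MemLp (fun x => p (R x) * ∑ i, D x i i) 1 volume := hdiv.mul' hP
  have z : ∀ n, ∫ x, (R x ^ 2 / (R x ^ 2 + epsk n)) * (p (R x) * ∑ i, D x i i) = 0 := by
    intro n
    have hd : ∀ s : ℝ, 0 < s ^ 2 + epsk n := fun s => by
      have := epsk_pos n
      positivity
    have hh : Continuous (fun s => p |s| / (s ^ 2 + epsk n)) :=
      pc.div (by fun_prop) fun s => (hd s).ne'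
    have := S.renorm (g := fun s => ∫ t in (0:ℝ)..s, p |t| / (t ^ 2 + epsk n))
      (h := fun s => p |s| / (s ^ 2 + epsk n))
      (fun s => intervalIntegral.integral_hasDerivAt_right (hh.intervalIntegrable _ _)
        (hh.stronglyMeasurableAtFilter _ _) hh.continuousAt) hh
    rw [← this]
    congr 1
    ext x
    rw [abs_of_nonneg (S.R0 x)]
    ring
  have c : CV 1 (fun n x => (R x ^ 2 / (R x ^ 2 + epsk n)) * (p (R x) * ∑ i, D x i i))
      (fun x => (if R x = 0 then 0 else 1) * (p (R x) * ∑ i, D x i i)) := by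
    refine CV.bdd_mul le_rfl (by norm_num) (C := 1) (fun n => ?_) (fun n x => ?_) ?_ (CV.const hI)
    · exact ((S.Rm.pow_const 2).div ((S.Rm.pow_const 2).add_const _)).aestronglyMeasurable
    · have := epsk_pos n
      rw [abs_of_nonneg (by positivity), div_le_one (by positivity)]
      linarith
    · refine Eventually.of_forall fun x => ?_
      split_ifs with h
      · simp [h]
      · have : Tendsto (fun n => R x ^ 2 / (R x ^ 2 + epsk n)) atTop
            (𝓝 (R x ^ 2 / (R x ^ 2 + 0))) :=
          tendsto_const_nhds.div (tendsto_const_nhds.add epsk_tendsto) (by simpa using h)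
        simpa [div_self (pow_ne_zero 2 h)] using this
  have c2 := c.integral
  simp only [z] at c2
  rw [tendsto_nhds_unique tendsto_const_nhds c2]
  congr 1
  ext x
  split_ifs with h
  · simp [h, hp0]
  · simp

lemma smat_cv (S : Setup M R U D v) (μ η : ℝ) (i j : Fin 3) :
    CV 2 (fun n x => Smat μ η (tgrad (v n) x) i j) (fun x => Smat μ η (D x) i j) := by
  have hdiv : CV 2 (fun n x => ∑ k, pd (fun y => v n y k) k x) (fun x => ∑ k, D x k k) :=
    CV.sum (by norm_num) _ fun k _ => S.vD k k
  have h2 : (1 : ℝ≥0∞) ≤ 2 := by norm_num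
  have := CV.add h2 (CV.const_mul μ (CV.add h2 (CV.add h2 (S.vD i j) (S.vD j i))
    (CV.const_mul (-(2 / 3) * (if i = j then (1 : ℝ) else 0)) hdiv)))
    (CV.const_mul (η * (if i = j then (1 : ℝ) else 0)) hdiv)
  refine this.congr (fun n x => ?_) (fun x => ?_)
  · simp only [Smat, tgrad]
    ring
  · simp only [Smat]
    ring

lemma main (S : Setup M R U D v) {μ η : ℝ} (hμ : 0 < μ) (hη : 0 ≤ η) {P : E3 → ℝ}
    (hP : MemLp P 2 volume) (hP0 : ∫ x, P x * ∑ i, D x i i = 0) {f : E3 → Fin 3 → ℝ}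
    (hf : ∀ i, MemLp (fun x => f x i) (ENNReal.ofReal (6/5)) volume)
    (hf0 : ∫ x, ∑ i, f x i * U x i = 0)
    (mom : ∀ n, ∫ x, ((∑ i, ∑ j, R x * U x i * U x j * tgrad (v n) x i j)
        + P x * (∑ i, tgrad (v n) x i i))
      = (∫ x, ∑ i, ∑ j, Smat μ η (D x) i j * tgrad (v n) x i j)
        - ∫ x, ∑ i, f x i * v n x i) :
    ∀ᵐ x, U x = 0 := by
  have h65 := ht65
  have h11 : (1 : ℝ≥0∞) ≤ 1 := le_rfl
  have cA : CV 1 (fun n x => ∑ i, ∑ j, R x * U x i * U x j * tgrad (v n) x i j)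
      (fun x => ∑ i, ∑ j, R x * U x i * U x j * D x i j) :=
    CV.sum h11 _ fun i _ => CV.sum h11 _ fun j _ =>
      CV.mul (p := 2) (q := 2) h11 (CV.const (S.RUU2 i j)) (S.vD i j)
  have cB : CV 1 (fun n x => P x * (∑ i, tgrad (v n) x i i)) (fun x => P x * ∑ i, D x i i) :=
    CV.mul (p := 2) (q := 2) h11 (CV.const hP) (CV.sum (by norm_num) _ fun i _ => S.vD i i)
  have cC : CV 1 (fun n x => ∑ i, ∑ j, Smat μ η (D x) i j * tgrad (v n) x i j)
      (fun x => ∑ i, ∑ j, Smat μ η (D x) i j * D x i j) :=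
    CV.sum h11 _ fun i _ => CV.sum h11 _ fun j _ =>
      CV.mul (p := 2) (q := 2) h11 (CV.const (S.smat_cv μ η i j).2.1) (S.vD i j)
  have cF : CV 1 (fun n x => ∑ i, f x i * v n x i) (fun x => ∑ i, f x i * U x i) :=
    CV.sum h11 _ fun i _ =>
      CV.mul (p := ENNReal.ofReal (6/5)) (q := 6) h11 (CV.const (hf i)) (S.vU i)
  have lim1 := (CV.add h11 cA cB).integral
  have lim2 := cC.integral.sub cF.integral
  have eq1 := tendsto_nhds_unique (lim1.congr mom) lim2
  rw [integral_add (memLp_one_iff_integrable.1 cA.2.1) (memLp_one_iff_integrable.1 cB.2.1),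
    S.convective, hP0, hf0] at eq1
  have SD0 : ∫ x, ∑ i, ∑ j, Smat μ η (D x) i j * D x i j = 0 := by linarith
  have cS : CV 1 (fun n x => ∑ i, ∑ j, Smat μ η (tgrad (v n) x) i j * tgrad (v n) x i j)
      (fun x => ∑ i, ∑ j, Smat μ η (D x) i j * D x i j) :=
    CV.sum h11 _ fun i _ => CV.sum h11 _ fun j _ =>
      CV.mul (p := 2) (q := 2) h11 (S.smat_cv μ η i j) (S.vD i j)
  have lim3 := cS.integral
  rw [SD0] at lim3
  have lim4 : Tendsto (fun n => μ * ∑ i, ∑ j, ∫ x, pd (fun y => v n y i) j x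
      * pd (fun y => v n y i) j x) atTop (𝓝 (μ * ∑ i, ∑ j, ∫ x, D x i j * D x i j)) :=
    tendsto_const_nhds.mul (tendsto_finset_sum _ fun i _ => tendsto_finset_sum _ fun j _ =>
      (CV.mul (p := 2) (q := 2) h11 (S.vD i j) (S.vD i j)).integral)
  have le0 : μ * ∑ i, ∑ j, ∫ x, D x i j * D x i j ≤ 0 :=
    le_of_tendsto_of_tendsto' lim4 lim3 fun n =>
      coercive hμ hη (fun i => S.vsmi n i) (fun i => S.vcsi n i)
  have nn : ∀ i j, 0 ≤ ∫ x, D x i j * D x i j := fun i j =>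
    integral_nonneg fun x => mul_self_nonneg _
  have D0 : ∀ i j, (fun x => D x i j) =ᵐ[volume] 0 := by
    intro i j
    have s0 : ∑ i, ∑ j, ∫ x, D x i j * D x i j ≤ 0 := by
      by_contra hcon
      push Not at hcon
      have := mul_pos hμ hcon
      linarith
    have h1 : ∫ x, D x i j * D x i j ≤ ∑ j, ∫ x, D x i j * D x i j :=
      Finset.single_le_sum (f := fun j => ∫ x, D x i j * D x i j) (fun j _ => nn i j)
        (Finset.mem_univ j)
    have h2 : ∑ j, ∫ x, D x i j * D x i j ≤ ∑ i, ∑ j, ∫ x, D x i j * D x i j :=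
      Finset.single_le_sum (f := fun i => ∑ j, ∫ x, D x i j * D x i j)
        (fun i _ => Finset.sum_nonneg fun j _ => nn i j) (Finset.mem_univ i)
    have h3 : ∫ x, D x i j * D x i j = 0 := le_antisymm (by linarith) (nn i j)
    have hDint : Integrable (fun x => D x i j * D x i j) volume :=
      memLp_one_iff_integrable.1 ((S.vD i j).2.1.mul' (p := 2) (S.vD i j).2.1)
    have h4 := (integral_eq_zero_iff_of_nonneg (fun x => mul_self_nonneg _) hDint).1 h3
    filter_upwards [h4] with x hx
    simpa using hx
  have dv0 : ∀ i j, Tendsto (fun n => eLpNorm (pd (fun y => v n y i) j) 2 volume) atTop (𝓝 0) := by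
    intro i j
    refine (S.vD i j).2.2.congr fun n => ?_
    refine eLpNorm_congr_ae ?_
    filter_upwards [D0 i j] with x hx
    simp only [Pi.zero_apply] at hx
    rw [hx, sub_zero]
  have U0 : ∀ i, (fun x => U x i) =ᵐ[volume] 0 := by
    intro i
    have t1 : Tendsto (fun n => eLpNorm (fun x => v n x i) 6 volume) atTop (𝓝 0) := by
      refine tendsto_zero_of_le_ennreal (fun n => gns _ (S.vsmi n i) (S.vcsi n i)) ?_
      have : Tendsto (fun n => (SNormLESNormFDerivOfEqConst ℝ (volume : Measure E3) 2 : ℝ≥0∞) *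
          ∑ j, eLpNorm (pd (fun y => v n y i) j) 2 volume) atTop
          (𝓝 ((SNormLESNormFDerivOfEqConst ℝ (volume : Measure E3) 2 : ℝ≥0∞) *
            ∑ j : Fin 3, 0)) :=
        ENNReal.Tendsto.const_mul (tendsto_finset_sum _ fun j _ => dv0 i j)
          (Or.inr ENNReal.coe_ne_top)
      simpa using this
    have t2 := t1.add (S.vU i).2.2
    rw [add_zero] at t2
    have le : ∀ n, eLpNorm (fun x => U x i) 6 volume ≤ eLpNorm (fun x => v n x i) 6 volume
        + eLpNorm (fun x => v n x i - U x i) 6 volume := by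
      intro n
      have := eLpNorm_sub_le (μ := (volume : Measure E3)) ((S.vU i).1 n).1
        (((S.vU i).1 n).sub (S.vU i).2.1).1 (p := 6) (by norm_num)
      refine le_trans (le_of_eq ?_) this
      congr 1
      ext x
      simp
    have := ge_of_tendsto' t2 le
    exact (eLpNorm_eq_zero_iff (S.vU i).2.1.1 (by norm_num)).1 (le_antisymm this bot_le)
  filter_upwards [U0 0, U0 1, U0 2] with x h0 h1 h2
  ext i
  fin_cases i <;> simp_all

end Setup


lemma cv_of_restrict {Ω : Set E3} (hΩ : MeasurableSet Ω) {p : ℝ≥0∞} {fn : ℕ → E3 → ℝ} {f : E3 → ℝ}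
    (hfn : ∀ n, MemLp (fn n) p volume) (h0 : ∀ n x, x ∉ Ω → fn n x = 0)
    (mf : AEStronglyMeasurable f (volume.restrict Ω))
    (h : Tendsto (fun n => eLpNorm (fun x => fn n x - f x) p (volume.restrict Ω)) atTop (𝓝 0)) :
    CV p fn (Ω.indicator f) := by
  refine ⟨hfn, ?_, ?_⟩
  · rw [memLp_indicator_iff_restrict hΩ]
    have h1 : ∀ᶠ n in atTop, eLpNorm (fun x => fn n x - f x) p (volume.restrict Ω) < ⊤ :=
      h.eventually_lt_const ENNReal.zero_lt_top
    obtain ⟨n, hn⟩ := h1.exists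
    have a : MemLp (fn n) p (volume.restrict Ω) := (hfn n).restrict Ω
    have b : MemLp (fun x => fn n x - f x) p (volume.restrict Ω) :=
      ⟨a.1.sub mf, hn⟩
    refine (a.sub b).ae_eq (Eventually.of_forall fun x => ?_)
    simp
  · refine h.congr fun n => ?_
    rw [← eLpNorm_indicator_eq_eLpNorm_restrict hΩ]
    congr 1
    ext x
    by_cases hx : x ∈ Ω
    · simp [hx]
    · simp [hx, h0 n x hx]

lemma setint_eq {Ω : Set E3} {F F' : E3 → ℝ}
    (h : ∀ᵐ x ∂(volume.restrict Ω), F x = F' x) (h0 : ∀ x, x ∉ Ω → F' x = 0) :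
    ∫ x in Ω, F x = ∫ x, F' x := by
  rw [integral_congr_ae h, setIntegral_eq_integral_of_forall_compl_eq_zero h0]

lemma pd_off {Ω : Set E3} {f : E3 → ℝ} (hf : tsupport f ⊆ Ω) (j : Fin 3) {x : E3} (hx : x ∉ Ω) :
    pd f j x = 0 := by
  have : fderiv ℝ f x = 0 := by
    by_contra hne
    exact hx (hf (support_fderiv_subset ℝ hne))
  simp [pd, this]

lemma tsupport_comp_sub {f : E3 → Fin 3 → ℝ} (i : Fin 3) :
    tsupport (fun x => f x i) ⊆ tsupport f := by
  refine closure_mono fun x hx => ?_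
  intro h
  exact hx (by simp [h])

lemma hcs_comp {f : E3 → Fin 3 → ℝ} (h : HasCompactSupport f) (i : Fin 3) :
    HasCompactSupport (fun x => f x i) :=
  h.mono' (subset_closure.trans (tsupport_comp_sub i))

lemma exists_setup {Ω : Set E3} (hΩ : IsOpen Ω) {μ η : ℝ} {p : ℝ → ℝ} {G : E3 → ℝ}
    {dG : E3 → Fin 3 → ℝ} {ρ : E3 → ℝ} {u : E3 → Fin 3 → ℝ} {du : E3 → Fin 3 → Fin 3 → ℝ}
    (hsol : WeakSolution Ω μ η p G dG ρ u du)
    (hρ1 : MemLp ρ 1 (volume.restrict Ω)) (hρ_top : MemLp ρ ⊤ (volume.restrict Ω)) :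
    ∃ (M : ℝ) (R : E3 → ℝ) (v : ℕ → E3 → Fin 3 → ℝ),
      Setup M R (fun x i => Ω.indicator (fun y => u y i) x)
        (fun x i j => Ω.indicator (fun y => du y i j) x) v ∧
      (∀ᵐ x ∂(volume.restrict Ω), ρ x = R x) ∧ (∀ x, x ∉ Ω → R x = 0) ∧
      (∀ n, IsTestVec ∞ Ω (v n)) := by
  have mΩ := hΩ.measurableSet
  obtain ⟨-, -, hdu, un, hun, hD, hU⟩ := hsol.u_D012
  have mu : AEStronglyMeasurable u (volume.restrict Ω) := hsol.aemeas_u.aestronglyMeasurable.restrict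
  have muN : ∀ n, AEStronglyMeasurable (un n) (volume.restrict Ω) := fun n =>
    (hun n).1.continuous.aestronglyMeasurable
  obtain ⟨ns, hns, hae⟩ := (tendstoInMeasure_of_tendsto_eLpNorm (by norm_num) muN mu
    hU).exists_seq_tendsto_ae
  set M : ℝ := (eLpNorm ρ ⊤ (volume.restrict Ω)).toReal with hM
  have hb : ∀ᵐ x ∂(volume.restrict Ω), ρ x ≤ M := by
    have h1 := ae_le_eLpNormEssSup (f := ρ) (μ := volume.restrict Ω)
    filter_upwards [h1] with x hx
    refine (le_abs_self _).trans ?_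
    have h2 : ‖ρ x‖ₑ ≤ eLpNorm ρ ⊤ (volume.restrict Ω) := by
      rw [eLpNorm_exponent_top]
      exact hx
    have h3 := ENNReal.toReal_mono hρ_top.2.ne h2
    rw [toReal_enorm] at h3
    exact h3
  have M0 : 0 ≤ M := ENNReal.toReal_nonneg
  let r := hsol.aemeas_ρ.mk ρ
  have hr : Measurable r := hsol.aemeas_ρ.measurable_mk
  let R : E3 → ℝ := Ω.indicator fun x => max 0 (min M (r x))
  have hR : ∀ᵐ x ∂(volume.restrict Ω), ρ x = R x := by
    filter_upwards [hb, hsol.ρ_nonneg, ae_restrict_of_ae hsol.aemeas_ρ.ae_eq_mk,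
      ae_restrict_mem mΩ] with x h1 h2 h3 h4
    simp only [R, indicator_of_mem h4, r]
    rw [← h3, min_eq_right h1, max_eq_right h2]
  have hR0 : ∀ x, x ∉ Ω → R x = 0 := fun x hx => indicator_of_notMem hx _
  have Rm : Measurable R := (measurable_const.max (measurable_const.min hr)).indicator mΩ
  have ci : ∀ n i, ContDiff ℝ ∞ (fun x => un n x i) := fun n i =>
    contDiff_pi.1 (hun n).1 i
  have cs : ∀ n i, HasCompactSupport (fun x => un n x i) := fun n i => hcs_comp (hun n).2.1 i
  have ts : ∀ n i, tsupport (fun x => un n x i) ⊆ Ω := fun n i =>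
    (tsupport_comp_sub i).trans (hun n).2.2
  refine ⟨M, R, fun n => un (ns n), ⟨Rm, ?_, ?_, ?_, fun n => (hun _).1, fun n => (hun _).2.1,
    fun i => ?_, fun i j => ?_, ?_, ?_⟩, hR, hR0, fun n => hun _⟩
  · intro x
    exact indicator_nonneg (fun _ _ => le_max_left _ _) x
  · intro x
    by_cases hx : x ∈ Ω
    · simp only [R, indicator_of_mem hx]
      exact max_le M0 (min_le_left _ _)
    · rw [hR0 x hx]
      exact M0
  · have : Integrable ρ (volume.restrict Ω) := memLp_one_iff_integrable.1 hρ1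
    have h2 : IntegrableOn R Ω volume := this.congr hR
    have h3 := (integrable_indicator_iff mΩ).2 h2
    have h4 : Ω.indicator R = R := by
      ext x
      by_cases hx : x ∈ Ω
      · rw [indicator_of_mem hx]
      · rw [indicator_of_notMem hx, hR0 x hx]
    rwa [h4] at h3
  · refine cv_of_restrict mΩ (fun n => (ci _ i).continuous.memLp_of_hasCompactSupport (cs _ i))
      (fun n x hx => ?_) ?_ ?_
    · exact image_eq_zero_of_notMem_tsupport (f := fun x => un (ns n) x i) fun h => hx (ts _ i h)
    · exact (measurable_pi_apply i).comp_aemeasurable hsol.aemeas_u.restrict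
        |>.aestronglyMeasurable
    · refine tendsto_zero_of_le_ennreal (fun n => ?_) (hU.comp hns.tendsto_atTop)
      exact eLpNorm_mono fun x => norm_le_pi_norm (un (ns n) x - u x) i
  · refine cv_of_restrict mΩ (fun n => ?_) (fun n x hx => pd_off (ts _ i) j hx) ?_ ?_
    · exact (pd_continuous ((ci _ i).of_le (by norm_num)) j).memLp_of_hasCompactSupport
        ((cs _ i).fderiv_apply ℝ _)
    · have := hdu.1
      exact (continuous_apply_apply i j).comp_aestronglyMeasurable this
    · refine tendsto_zero_of_le_ennreal (fun n => ?_) (hD.comp hns.tendsto_atTop)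
      exact eLpNorm_mono fun x => (norm_le_pi_norm ((tgrad (un (ns n)) x - du x) i) j).trans
        (norm_le_pi_norm (tgrad (un (ns n)) x - du x) i)
  · have := (ae_restrict_iff' mΩ).1 hae
    filter_upwards [this] with x hx
    by_cases h : x ∈ Ω
    · simpa [h] using hx h
    · have e : ∀ n, un (ns n) x = 0 := fun n =>
        image_eq_zero_of_notMem_tsupport fun h' => h ((hun _).2.2 h')
      simp only [e, indicator_of_notMem h]
      exact tendsto_const_nhds
  · intro φ h1 h2
    rw [← hsol.mass φ h1 h2]
    symm
    refine setint_eq ?_ fun x hx => by rw [hR0 x hx, zero_mul]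
    filter_upwards [hR, ae_restrict_mem mΩ] with x hx hm
    simp [hx, hm]

lemma liouville_aux
    (Ω : Set E3) (hΩ_open : IsOpen Ω)
    (μ η : ℝ) (hμ : 0 < μ) (hη : 0 ≤ η)
    (p : ℝ → ℝ) (G : E3 → ℝ) (dG : E3 → Fin 3 → ℝ)
    (ρ : E3 → ℝ) (u : E3 → Fin 3 → ℝ) (du : E3 → Fin 3 → Fin 3 → ℝ)
    (hp_cont : ContinuousOn p (Ici 0)) (hp0 : p 0 = 0)
    (hp_nonneg : ∀ s, 0 ≤ s → 0 ≤ p s)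
    (hp_sqrt : ∃ C > 0, ∀ s, 0 ≤ s → s < 1 → p s ≤ C * Real.sqrt s)
    (hG : (∃ q : ℝ, 6 / 5 ≤ q ∧ MemD01q Ω G dG q) ∨ MemW1inf Ω G dG)
    (hsol : WeakSolution Ω μ η p G dG ρ u du)
    (hρ1 : MemLp ρ 1 (volume.restrict Ω)) (hρ_top : MemLp ρ ⊤ (volume.restrict Ω)) :
    ∀ᵐ x ∂(volume.restrict Ω), u x = 0 := by
  have mΩ := hΩ_open.measurableSet
  obtain ⟨M, R, v, S, hR, hR0, hv⟩ := exists_setup hΩ_open hsol hρ1 hρ_top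
  have ts : ∀ n i, tsupport (fun x => v n x i) ⊆ Ω := fun n i =>
    (tsupport_comp_sub i).trans (hv n).2.2
  have key : (∀ i, MemLp (fun x => R x * Ω.indicator (fun y => dG y i) x) (ENNReal.ofReal (6/5))) ∧
      ∫ x, ∑ i, R x * Ω.indicator (fun y => dG y i) x * Ω.indicator (fun y => u y i) x = 0 := by
    rcases hG with ⟨q, hq, -, hdG, Gn, hGn, hGc, -⟩ | ⟨hw, hG1, hG2⟩
    · have hq' : ENNReal.ofReal (6/5) ≤ ENNReal.ofReal q := ENNReal.ofReal_le_ofReal hq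
      have c : ∀ i, CV (ENNReal.ofReal q) (fun n x => pd (Gn n) i x)
          (fun x => Ω.indicator (fun y => dG y i) x) := by
        intro i
        refine cv_of_restrict mΩ (fun n => ?_) (fun n x hx => pd_off (hGn n).2.2 i hx) ?_ ?_
        · exact (pd_continuous ((hGn n).1.of_le (by norm_num)) i).memLp_of_hasCompactSupport
            ((hGn n).2.1.fderiv_apply ℝ _)
        · exact (continuous_apply i).comp_aestronglyMeasurable hdG.1
        · refine tendsto_zero_of_le_ennreal (fun n => ?_) hGc
          exact eLpNorm_mono fun x => norm_le_pi_norm ((fun i => pd (Gn n) i x) - dG x) i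
      exact ⟨fun i => S.force_memLp hq' (c i).2.1,
        S.force_D01q (g := fun x i => Ω.indicator (fun y => dG y i) x) hq'
          (fun n => (hGn n).1) (fun n => (hGn n).2.1) c⟩
    · have hdi : ∀ i, MemLp (fun x => Ω.indicator (fun y => dG y i) x) ⊤ volume := by
        intro i
        refine (memLp_indicator_iff_restrict mΩ).2 ?_
        exact hG2.mono ((continuous_apply i).comp_aestronglyMeasurable hG2.1)
          (Eventually.of_forall fun x => norm_le_pi_norm (dG x) i)
      have hgi : MemLp (Ω.indicator G) ⊤ volume := (memLp_indicator_iff_restrict mΩ).2 hG1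
      have bd : ∀ f : E3 → ℝ, MemLp f ⊤ volume →
          ∀ᵐ x, |f x| ≤ (eLpNorm f ⊤ volume).toReal := by
        intro f hf
        filter_upwards [ae_le_eLpNormEssSup (f := f) (μ := volume)] with x hx
        have h2 : ‖f x‖ₑ ≤ eLpNorm f ⊤ volume := by
          rw [eLpNorm_exponent_top]
          exact hx
        simpa using ENNReal.toReal_mono hf.2.ne h2
      refine ⟨fun i => S.force_memLp le_top (hdi i), ?_⟩
      set C := (eLpNorm (Ω.indicator G) ⊤ volume).toReal +
        ∑ i, (eLpNorm (fun x => Ω.indicator (fun y => dG y i) x) ⊤ volume).toReal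
      refine S.force_W1inf (Ω := Ω) (C := C) (g := Ω.indicator G)
        (dg := fun x i => Ω.indicator (fun y => dG y i) x) (fun n => (hv n).2.2) hgi.1 ?_
        (fun i => (hdi i).1) (fun i => ?_) ?_
      · filter_upwards [bd _ hgi] with x hx
        exact hx.trans (le_add_of_nonneg_right (Finset.sum_nonneg fun _ _ => ENNReal.toReal_nonneg))
      · filter_upwards [bd _ (hdi i)] with x hx
        refine hx.trans (le_trans ?_ (le_add_of_nonneg_left ENNReal.toReal_nonneg))
        exact Finset.single_le_sum
          (f := fun i => (eLpNorm (fun x => Ω.indicator (fun y => dG y i) x) ⊤ volume).toReal)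
          (fun _ _ => ENNReal.toReal_nonneg) (Finset.mem_univ i)
      · intro φ hφ i
        have := hw φ hφ i
        rw [setint_eq (F' := fun x => Ω.indicator G x * pd φ i x) ?_ ?_,
          setint_eq (F' := fun x => Ω.indicator (fun y => dG y i) x * φ x) ?_ ?_] at this
        · exact this
        all_goals first
          | (intro x hx; simp [hx]; done)
          | (filter_upwards [ae_restrict_mem mΩ] with x hx; simp [hx]; done)
  have hP := S.pressure_memLp hp_cont hp_nonneg hp_sqrt
  have hP0 := S.pressure_zero hp_cont hp0 hP
  have fin := S.main (f := fun x i => R x * Ω.indicator (fun y => dG y i) x) hμ hη hP hP0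
    key.1 key.2 ?_
  · rw [ae_restrict_iff' mΩ]
    filter_upwards [fin] with x hx hm
    ext i
    simpa [hm] using congrFun hx i
  · intro n
    have hm := hsol.momentum (v n) ⟨(hv n).1.of_le (by norm_num), (hv n).2⟩
    have tg : ∀ x, x ∉ Ω → ∀ i j, tgrad (v n) x i j = 0 := fun x hx i j => pd_off (ts n i) j hx
    rw [setint_eq (F' := fun x => (∑ i, ∑ j, R x * Ω.indicator (fun y => u y i) x *
          Ω.indicator (fun y => u y j) x * tgrad (v n) x i j)
          + p (R x) * (∑ i, tgrad (v n) x i i)) ?_ ?_,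
      setint_eq (F' := fun x => ∑ i, ∑ j, Smat μ η
        (fun i j => Ω.indicator (fun y => du y i j) x) i j * tgrad (v n) x i j) ?_ ?_,
      setint_eq (F' := fun x => ∑ i, R x * Ω.indicator (fun y => dG y i) x * v n x i) ?_ ?_] at hm
    · exact hm
    · filter_upwards [hR, ae_restrict_mem mΩ] with x hx hm'
      simp only [hx, indicator_of_mem hm']
    · intro x hx
      simp [hR0 x hx]
    · filter_upwards [ae_restrict_mem mΩ] with x hm'
      simp only [indicator_of_mem hm']
    · intro x hx
      simp [tg x hx]
    · filter_upwards [hR, ae_restrict_mem mΩ] with x hx hm'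
      simp only [hx, indicator_of_mem hm']
    · intro x hx
      simp [hR0 x hx, hp0]

end aux

/-- **Theorem 1.** If the total mass of a weak solution is finite (`ρ ∈ L¹ ∩ L^∞(Ω)`), the
pressure satisfies `p(0) = 0`, `p ≥ 0`, `p(s) ≲ √s` for `s < 1`, and the potential `G` belongs
either to `D₀^{1,q}(Ω)` for some `6/5 ≤ q < ∞` or to `W^{1,∞}(Ω)`, then `u = 0` a.e. in `Ω`. -/
theorem liouville_finite_mass
    (Ω : Set E3) (hΩ_open : IsOpen Ω) (hΩ_conn : IsConnected Ω)
    (μ η : ℝ) (hμ : 0 < μ) (hη : 0 ≤ η)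
    (p : ℝ → ℝ) (G : E3 → ℝ) (dG : E3 → Fin 3 → ℝ)
    (ρ : E3 → ℝ) (u : E3 → Fin 3 → ℝ) (du : E3 → Fin 3 → Fin 3 → ℝ)
    (hp_cont : ContinuousOn p (Ici 0)) (hp0 : p 0 = 0)
    (hp_nonneg : ∀ s, 0 ≤ s → 0 ≤ p s)
    (hp_sqrt : ∃ C > 0, ∀ s, 0 ≤ s → s < 1 → p s ≤ C * Real.sqrt s)
    (hG : (∃ q : ℝ, 6 / 5 ≤ q ∧ MemD01q Ω G dG q) ∨ MemW1inf Ω G dG)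
    (hsol : WeakSolution Ω μ η p G dG ρ u du)
    (hρ1 : MemLp ρ 1 (volume.restrict Ω)) (hρ_top : MemLp ρ ⊤ (volume.restrict Ω)) :
    ∀ᵐ x ∂(volume.restrict Ω), u x = 0 := by
  exact liouville_aux Ω hΩ_open μ η hμ hη p G dG ρ u du hp_cont hp0 hp_nonneg hp_sqrt hG hsol
    hρ1 hρ_top
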